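/- arXiv:1504.07594 — 2 statements merged into one kernel-verified Lean document; each statement's English description precedes it below -/
import Mathlib

section
/- If the comodule category A_F of the normal triangular matrix comonad F is hereditary, then for each 1 ≤ m ≤ n−1 and every epimorphism p : (E, d_E) ⟶ (E', d_{E'}) between injective F^{≤m}-comodules, the morphism T^m(p) is a split epimorphism. -/
/-!
STATEMENT 16: If the category of comodules over a normal triangular matrix comonad
`F` on `A₁ × ⋯ × Aₙ` is hereditary, then for each `1 ≤ m ≤ n - 1` the functor
`T^m : (F^{≤m})-comodules ⥤ (F^{>m})-comodules` (characterised below by the universal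
property of the defining equalizers) sends every epimorphism between injective
`F^{≤m}`-comodules to a split epimorphism.
-/

open CategoryTheory Limits

universe v u

attribute [local instance] CategoryTheory.Abelian.hasFiniteBiproducts
attribute [local instance] CategoryTheory.Limits.hasBinaryBiproducts_of_finite_biproducts

variable {n : ℕ} {A : Fin n → Type u} [∀ i, Category.{v} (A i)]
  [∀ i, Abelian (A i)] [∀ i, EnoughInjectives (A i)]
variable (F : ∀ ⦃i j : Fin n⦄, i < j → (A i ⥤ A j))
variable (δ : ∀ ⦃i k j : Fin n⦄ (h₁ : i < k) (h₂ : k < j), F (h₁.trans h₂) ⟶ F h₁ ⋙ F h₂)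

/-- A comodule, over the sub-linearly-ordered set `s` of indices, for the triangular
matrix data `(F, δ)`.  For `s = Set.univ` this is exactly the category of comodules
over the normal triangular matrix comonad `F`; for `s = {i | i < m}` (resp.
`s = {i | m ≤ i}`) it is the category of `F^{≤m}`-comodules (resp. `F^{>m}`-comodules). -/
structure Comod (s : Set (Fin n)) where
  X : ∀ i : s, A i.1
  d : ∀ {i j : s} (h : i.1 < j.1), X j ⟶ (F h).obj (X i)
  compat : ∀ {i k j : s} (h₁ : i.1 < k.1) (h₂ : k.1 < j.1),
    d h₂ ≫ (F h₂).map (d h₁) = d (h₁.trans h₂) ≫ (δ h₁ h₂).app (X i)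

/-- Morphisms of comodules. -/
@[ext]
structure ComodHom {s : Set (Fin n)} (M N : Comod F δ s) where
  f : ∀ i : s, M.X i ⟶ N.X i
  comm : ∀ {i j : s} (h : i.1 < j.1), f j ≫ N.d h = M.d h ≫ (F h).map (f i)

instance {s : Set (Fin n)} : Category (Comod F δ s) where
  Hom M N := ComodHom F δ M N
  id M := ⟨fun i => 𝟙 (M.X i), fun h => by simp⟩
  comp f g := ⟨fun i => f.f i ≫ g.f i, fun h => by
    rw [Category.assoc, g.comm, ← Category.assoc, f.comm, Category.assoc, Functor.map_comp]⟩
  id_comp f := by apply ComodHom.ext; funext i; exact Category.id_comp _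
  comp_id f := by apply ComodHom.ext; funext i; exact Category.comp_id _
  assoc f g h := by apply ComodHom.ext; funext i; exact Category.assoc _ _ _

/-- A category is hereditary if for every epimorphism `e : E ⟶ X` with `E` injective,
`X` is also injective. -/
def Hereditary (C : Type*) [Category C] : Prop :=
  ∀ ⦃E X : C⦄ (e : E ⟶ X), Epi e → Injective E → Injective X

/-- The set of indices `{1, …, m}` (`0`-based: `i < m`). -/
def lowSet (n m : ℕ) : Set (Fin n) := {i | (i : ℕ) < m}

/-- The set of indices `{m+1, …, n}` (`0`-based: `m ≤ i`). -/
def highSet (n m : ℕ) : Set (Fin n) := {i | m ≤ (i : ℕ)}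

theorem low_lt_high {m : ℕ} (i : lowSet n m) (j : highSet n m) : i.1 < j.1 :=
  Fin.lt_def.mpr (lt_of_lt_of_le i.2 j.2)

variable {m : ℕ}

/-- The value at index `j > m` of the image of an `F^{≤m}`-comodule `X` under the
bicomodule functor `F^m`, namely `⨁_{i ≤ m} F_{ij}(X_i)`. -/
noncomputable def VObj (X : Comod F δ (lowSet n m)) (j : highSet n m) : A j.1 :=
  ⨁ fun i : lowSet n m => (F (low_lt_high i j)).obj (X.X i)

/-- The value at an index `k ≤ m` of `F^{≤m}X`, i.e. `X_k ⊕ ⨁_{i<k} F_{ik}(X_i)`. -/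
noncomputable def Glow (X : Comod F δ (lowSet n m)) (k : lowSet n m) : A k.1 :=
  X.X k ⊞ (⨁ fun i : {i : lowSet n m // i.1 < k.1} => (F i.2).obj (X.X i.1))

/-- The total coaction `X_k ⟶ (F^{≤m}X)_k` of an `F^{≤m}`-comodule. -/
noncomputable def coact (X : Comod F δ (lowSet n m)) (k : lowSet n m) :
    X.X k ⟶ Glow F δ X k :=
  biprod.lift (𝟙 _) (biproduct.lift fun i => X.d i.2)

/-- The value at index `j > m` of the image under `F^m` of `F^{≤m}X`,
namely `⨁_{k ≤ m} F_{kj}((F^{≤m}X)_k)`. -/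
noncomputable def WObj (X : Comod F δ (lowSet n m)) (j : highSet n m) : A j.1 :=
  ⨁ fun k : lowSet n m => (F (low_lt_high k j)).obj (Glow F δ X k)

/-- The natural map `ρ : V^m X ⟶ F^m(F^{≤m}X)` assembled from the `δ^{ikj}`
(`i ≤ k ≤ m < j`), with identity components for `k = i`. -/
noncomputable def phi (X : Comod F δ (lowSet n m)) (j : highSet n m) :
    VObj F δ X j ⟶ WObj F δ X j :=
  biproduct.matrix fun i k =>
    if h : i.1 < k.1 then
      (δ h (low_lt_high k j)).app (X.X i) ≫
        (F (low_lt_high k j)).map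
          (biproduct.ι (fun i' : {i' : lowSet n m // i'.1 < k.1} =>
            (F i'.2).obj (X.X i'.1)) ⟨i, h⟩ ≫ biprod.inr)
    else if he : i = k then
      eqToHom (by subst he; rfl) ≫ (F (low_lt_high k j)).map biprod.inl
    else 0

/-- The map `V^m X ⟶ F^m(F^{≤m}X)` given by applying the `F_{kj}` to the total
coactions of the comodule `X`. -/
noncomputable def psi (X : Comod F δ (lowSet n m)) (j : highSet n m) :
    VObj F δ X j ⟶ WObj F δ X j :=
  biproduct.matrix fun i k =>
    if he : i = k then
      eqToHom (by subst he; rfl) ≫ (F (low_lt_high k j)).map (coact F δ X k)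
    else 0

/-- The `λ`-coaction of the bicomodule functor `V^m = F^m`, at indices
`m < j < k`: `(V^m X)_k ⟶ F_{jk}((V^m X)_j)`, with components `δ^{ijk}`. -/
noncomputable def lamV (X : Comod F δ (lowSet n m)) (j k : highSet n m)
    (h : j.1 < k.1) : VObj F δ X k ⟶ (F h).obj (VObj F δ X j) :=
  biproduct.desc fun i =>
    (δ (low_lt_high i j) h).app (X.X i) ≫
      (F h).map (biproduct.ι (fun i' : lowSet n m =>
        (F (low_lt_high i' j)).obj (X.X i')) i)

/-- The action of the functor `V^m` on a morphism of `F^{≤m}`-comodules. -/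
noncomputable def Vmap {X Y : Comod F δ (lowSet n m)} (f : X ⟶ Y) (j : highSet n m) :
    VObj F δ X j ⟶ VObj F δ Y j :=
  biproduct.map fun i => (F (low_lt_high i j)).map (f.f i)

set_option linter.unusedSectionVars false
set_option linter.unusedVariables false

/-! ### Helper material -/

theorem comod_comp_f {s : Set (Fin n)} {M N P : Comod F δ s} (f : M ⟶ N) (g : N ⟶ P) (i : s) :
    (f ≫ g).f i = f.f i ≫ g.f i := rfl

theorem comod_id_f {s : Set (Fin n)} (M : Comod F δ s) (i : s) :
    ComodHom.f (𝟙 M : M ⟶ M) i = 𝟙 (M.X i) := rfl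

/-- an index seen in the full index set -/
abbrev full (i : Fin n) : (Set.univ : Set (Fin n)) := ⟨i, trivial⟩

/-- Component-objects of the glued comodule. -/
def glueX (M : Comod F δ (lowSet n m)) (N : Comod F δ (highSet n m)) (i : Fin n)
    (c : Decidable ((i : ℕ) < m)) : A i :=
  match c with
  | isTrue h => M.X ⟨i, h⟩
  | isFalse h => N.X ⟨i, not_lt.mp h⟩

/-- Structure maps of the glued comodule. -/
def glueD (M : Comod F δ (lowSet n m)) (N : Comod F δ (highSet n m))
    (c : ∀ (i : lowSet n m) (j : highSet n m), N.X j ⟶ (F (low_lt_high i j)).obj (M.X i))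
    {i j : Fin n} (h : i < j) (ci : Decidable ((i : ℕ) < m)) (cj : Decidable ((j : ℕ) < m)) :
    glueX F δ M N j cj ⟶ (F h).obj (glueX F δ M N i ci) :=
  match ci, cj with
  | isTrue hi, isTrue hj => M.d (i := ⟨i, hi⟩) (j := ⟨j, hj⟩) h
  | isTrue hi, isFalse hj => c ⟨i, hi⟩ ⟨j, not_lt.mp hj⟩
  | isFalse hi, isTrue hj => absurd (lt_trans (Fin.lt_def.mp h) hj) hi
  | isFalse hi, isFalse hj => N.d (i := ⟨i, not_lt.mp hi⟩) (j := ⟨j, not_lt.mp hj⟩) h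

/-- A comodule obtained by glueing. -/
structure Glue (M : Comod F δ (lowSet n m)) (N : Comod F δ (highSet n m))
    (c : ∀ (i : lowSet n m) (j : highSet n m), N.X j ⟶ (F (low_lt_high i j)).obj (M.X i)) where
  G : Comod F δ (Set.univ : Set (Fin n))
  lo : ∀ i : lowSet n m, G.X (full i.1) ≅ M.X i
  hi : ∀ j : highSet n m, G.X (full j.1) ≅ N.X j
  hLL : ∀ (i j : lowSet n m) (h : i.1 < j.1),
    G.d (i := full i.1) (j := full j.1) h = (lo j).hom ≫ M.d h ≫ (F h).map (lo i).inv
  hLH : ∀ (i : lowSet n m) (j : highSet n m) (h : i.1 < j.1),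
    G.d (i := full i.1) (j := full j.1) h = (hi j).hom ≫ c i j ≫ (F h).map (lo i).inv
  hHH : ∀ (i j : highSet n m) (h : i.1 < j.1),
    G.d (i := full i.1) (j := full j.1) h = (hi j).hom ≫ N.d h ≫ (F h).map (hi i).inv

/-- comparison isomorphism -/
def glueLo (M : Comod F δ (lowSet n m)) (N : Comod F δ (highSet n m)) (i : lowSet n m)
    (c : Decidable ((i.1 : ℕ) < m)) : glueX F δ M N i.1 c ≅ M.X i :=
  match c with
  | isTrue _ => Iso.refl _
  | isFalse h => absurd i.2 h

/-- comparison isomorphism -/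
def glueHi (M : Comod F δ (lowSet n m)) (N : Comod F δ (highSet n m)) (i : highSet n m)
    (c : Decidable ((i.1 : ℕ) < m)) : glueX F δ M N i.1 c ≅ N.X i :=
  match c with
  | isTrue h => absurd h (not_lt.mpr i.2)
  | isFalse _ => Iso.refl _

/-- glueing -/
def glue (M : Comod F δ (lowSet n m)) (N : Comod F δ (highSet n m))
    (c : ∀ (i : lowSet n m) (j : highSet n m), N.X j ⟶ (F (low_lt_high i j)).obj (M.X i))
    (c1 : ∀ (i k : lowSet n m) (j : highSet n m) (h : i.1 < k.1),
      c k j ≫ (F (low_lt_high k j)).map (M.d h) =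
        c i j ≫ (δ h (low_lt_high k j)).app (M.X i))
    (c2 : ∀ (i : lowSet n m) (j k : highSet n m) (h : j.1 < k.1),
      N.d h ≫ (F h).map (c i j) = c i k ≫ (δ (low_lt_high i j) h).app (M.X i)) :
    Glue F δ M N c where
  G :=
    { X := fun i => glueX F δ M N i.1 (Nat.decLt _ _)
      d := fun h => glueD F δ M N c h (Nat.decLt _ _) (Nat.decLt _ _)
      compat := by
        rintro ⟨i, -⟩ ⟨k, -⟩ ⟨j, -⟩ hik hkj
        dsimp only at hik hkj ⊢
        generalize Nat.decLt (i : ℕ) m = ci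
        generalize Nat.decLt (k : ℕ) m = ck
        generalize Nat.decLt (j : ℕ) m = cj
        have h1 := Fin.lt_def.mp hik
        have h2 := Fin.lt_def.mp hkj
        rcases ci with hi | hi <;> rcases ck with hk | hk <;> rcases cj with hj | hj <;>
          first
          | (exfalso; omega)
          | exact M.compat (i := ⟨i, hi⟩) (k := ⟨k, hk⟩) (j := ⟨j, hj⟩) hik hkj
          | exact N.compat (i := ⟨i, not_lt.mp hi⟩) (k := ⟨k, not_lt.mp hk⟩)
              (j := ⟨j, not_lt.mp hj⟩) hik hkj
          | exact c1 ⟨i, hi⟩ ⟨k, hk⟩ ⟨j, not_lt.mp hj⟩ hik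
          | exact c2 ⟨i, hi⟩ ⟨k, not_lt.mp hk⟩ ⟨j, not_lt.mp hj⟩ hkj }
  lo i := glueLo F δ M N i _
  hi i := glueHi F δ M N i _
  hLL := by
    rintro ⟨i, hi⟩ ⟨j, hj⟩ h
    dsimp only [full] at h ⊢
    generalize Nat.decLt (i : ℕ) m = ci
    generalize Nat.decLt (j : ℕ) m = cj
    rcases ci with hi' | hi'
    · exact absurd hi hi'
    rcases cj with hj' | hj'
    · exact absurd hj hj'
    simp [glueLo, glueD, glueX]
  hLH := by
    rintro ⟨i, hi⟩ ⟨j, hj⟩ h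
    dsimp only [full] at h ⊢
    generalize Nat.decLt (i : ℕ) m = ci
    generalize Nat.decLt (j : ℕ) m = cj
    rcases ci with hi' | hi'
    · exact absurd hi hi'
    rcases cj with hj' | hj'
    · simp [glueLo, glueHi, glueD, glueX]
    · exact absurd hj' (not_lt.mpr hj)
  hHH := by
    rintro ⟨i, hi⟩ ⟨j, hj⟩ h
    dsimp only [full] at h ⊢
    generalize Nat.decLt (i : ℕ) m = ci
    generalize Nat.decLt (j : ℕ) m = cj
    rcases ci with hi' | hi'
    · rcases cj with hj' | hj'
      · simp [glueHi, glueD, glueX]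
      · exact absurd hj' (not_lt.mpr hj)
    · exact absurd hi' (not_lt.mpr hi)

/-- Building morphisms of full comodules from low and high components. -/
def mkHom (Z W : Comod F δ (Set.univ : Set (Fin n)))
    (fl : ∀ i : lowSet n m, Z.X (full i.1) ⟶ W.X (full i.1))
    (fh : ∀ i : highSet n m, Z.X (full i.1) ⟶ W.X (full i.1))
    (hLL : ∀ (i j : lowSet n m) (h : i.1 < j.1),
      fl j ≫ W.d (i := full i.1) (j := full j.1) h = Z.d (i := full i.1) h ≫ (F h).map (fl i))
    (hLH : ∀ (i : lowSet n m) (j : highSet n m) (h : i.1 < j.1),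
      fh j ≫ W.d (i := full i.1) (j := full j.1) h = Z.d (i := full i.1) h ≫ (F h).map (fl i))
    (hHH : ∀ (i j : highSet n m) (h : i.1 < j.1),
      fh j ≫ W.d (i := full i.1) (j := full j.1) h = Z.d (i := full i.1) h ≫ (F h).map (fh i)) :
    Z ⟶ W where
  f := fun i => if h : (i.1 : ℕ) < m then fl ⟨i.1, h⟩ else fh ⟨i.1, not_lt.mp h⟩
  comm := by
    rintro ⟨i, -⟩ ⟨j, -⟩ h
    have h' := Fin.lt_def.mp h
    dsimp only at h h' ⊢
    by_cases hi : (i : ℕ) < m <;> by_cases hj : (j : ℕ) < m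
    · rw [dif_pos hi, dif_pos hj]; exact hLL ⟨i, hi⟩ ⟨j, hj⟩ h
    · rw [dif_pos hi, dif_neg hj]; exact hLH ⟨i, hi⟩ ⟨j, not_lt.mp hj⟩ h
    · exfalso; omega
    · rw [dif_neg hi, dif_neg hj]; exact hHH ⟨i, not_lt.mp hi⟩ ⟨j, not_lt.mp hj⟩ h

theorem mkHom_lo {Z W : Comod F δ (Set.univ : Set (Fin n))}
    (fl : ∀ i : lowSet n m, Z.X (full i.1) ⟶ W.X (full i.1))
    (fh : ∀ i : highSet n m, Z.X (full i.1) ⟶ W.X (full i.1)) (hLL hLH hHH) (i : lowSet n m) :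
    (mkHom F δ Z W fl fh hLL hLH hHH).f (full i.1) = fl i :=
  dif_pos i.2

theorem mkHom_hi {Z W : Comod F δ (Set.univ : Set (Fin n))}
    (fl : ∀ i : lowSet n m, Z.X (full i.1) ⟶ W.X (full i.1))
    (fh : ∀ i : highSet n m, Z.X (full i.1) ⟶ W.X (full i.1)) (hLL hLH hHH) (i : highSet n m) :
    (mkHom F δ Z W fl fh hLL hLH hHH).f (full i.1) = fh i :=
  dif_neg (not_lt.mpr i.2)

theorem hom_ext_lh (m : ℕ) {Z W : Comod F δ (Set.univ : Set (Fin n))} (f g : Z ⟶ W)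
    (hl : ∀ i : lowSet n m, f.f (full i.1) = g.f (full i.1))
    (hh : ∀ i : highSet n m, f.f (full i.1) = g.f (full i.1)) : f = g := by
  apply ComodHom.ext
  funext i
  by_cases hi : (i.1 : ℕ) < m
  · exact hl ⟨i.1, hi⟩
  · exact hh ⟨i.1, not_lt.mp hi⟩

/-- restriction to low indices -/
abbrev resL (m : ℕ) (Z : Comod F δ (Set.univ : Set (Fin n))) : Comod F δ (lowSet n m) where
  X i := Z.X (full i.1)
  d {i j} h := Z.d (i := full i.1) (j := full j.1) h
  compat {i k j} ha hb := Z.compat (i := full i.1) (k := full k.1) (j := full j.1) ha hb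

/-- restriction of morphisms to low indices -/
def resLMap (m : ℕ) {Z W : Comod F δ (Set.univ : Set (Fin n))} (f : Z ⟶ W) :
    resL F δ m Z ⟶ resL F δ m W where
  f i := f.f (full i.1)
  comm {i j} h := f.comm (i := full i.1) (j := full j.1) h

open scoped ZeroObject in
/-- the zero comodule -/
noncomputable def zeroC (s : Set (Fin n)) : Comod F δ s where
  X i := 0
  d h := 0
  compat h h' := (isZero_zero _).eq_of_src _ _

theorem zeroC_isZero (s : Set (Fin n)) (i : s) : IsZero ((zeroC F δ s).X i) := isZero_zero _

/-- extension by zero -/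
noncomputable def extZero (M : Comod F δ (lowSet n m)) :
    Glue F δ M (zeroC F δ (highSet n m)) (fun _ _ => 0) :=
  glue F δ M _ _ (fun _ _ _ _ => (zeroC_isZero F δ _ _).eq_of_src _ _)
    (fun _ _ _ _ => (zeroC_isZero F δ _ _).eq_of_src _ _)

theorem extZero_hi (M : Comod F δ (lowSet n m)) (j : highSet n m) :
    IsZero ((extZero F δ M).G.X (full j.1)) :=
  (zeroC_isZero F δ _ j).of_iso ((extZero F δ M).hi j)

/-- adjunction: morphisms from the extension by zero -/
noncomputable def extZeroHom (M : Comod F δ (lowSet n m))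
    {Z : Comod F δ (Set.univ : Set (Fin n))} (a : M ⟶ resL F δ m Z) :
    (extZero F δ M).G ⟶ Z :=
  mkHom F δ _ _ (fun i => ((extZero F δ M).lo i).hom ≫ a.f i) (fun _ => 0)
    (fun i j h => by
      have := a.comm h
      rw [(extZero F δ M).hLL]
      simp only [Category.assoc, Functor.map_comp]
      rw [← Functor.map_comp_assoc, Iso.inv_hom_id, CategoryTheory.Functor.map_id, Category.id_comp, ← this])
    (fun i j h => (extZero_hi F δ M j).eq_of_src _ _)
    (fun i j h => (extZero_hi F δ M j).eq_of_src _ _)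

theorem resLMap_mono (m : ℕ) {Z W : Comod F δ (Set.univ : Set (Fin n))} (f : Z ⟶ W) [Mono f] :
    Mono (resLMap F δ m f) := by
  constructor
  intro M a b hab
  have key : extZeroHom F δ M a = extZeroHom F δ M b := by
    rw [← cancel_mono f]
    apply hom_ext_lh F δ m
    · intro i
      have : a.f i ≫ f.f (full i.1) = b.f i ≫ f.f (full i.1) :=
        congrArg (fun t => ComodHom.f t i) hab
      rw [comod_comp_f, comod_comp_f, extZeroHom, extZeroHom, mkHom_lo, mkHom_lo,
        Category.assoc, Category.assoc, this]
    · intro i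
      exact (extZero_hi F δ M i).eq_of_src _ _
  apply ComodHom.ext
  funext i
  have := congrArg (fun t => ComodHom.f t (full i.1)) key
  dsimp only at this
  rw [extZeroHom, extZeroHom, mkHom_lo, mkHom_lo] at this
  exact (cancel_epi _).mp this

theorem map_biprod_hom_ext {C D : Type*} [Category C] [Category D] [Preadditive C] [Preadditive D]
    (H : C ⥤ D) [H.Additive] {J : Type} [Finite J] (X : J → C) [HasBiproduct X] {Z : D}
    (f g : Z ⟶ H.obj (⨁ X)) (h : ∀ j, f ≫ H.map (biproduct.π X j) = g ≫ H.map (biproduct.π X j)) :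
    f = g := by
  classical
  cases nonempty_fintype J
  have key : ∀ f : Z ⟶ H.obj (⨁ X),
      f = ∑ j, (f ≫ H.map (biproduct.π X j)) ≫ H.map (biproduct.ι X j) := by
    intro f
    simp only [Category.assoc, ← Functor.map_comp]
    rw [← Preadditive.comp_sum, ← Functor.map_sum, biproduct.total]
    simp
  rw [key f, key g]
  simp only [h]

theorem map_biprod2_hom_ext {C D : Type*} [Category C] [Category D] [Preadditive C] [Preadditive D]
    (H : C ⥤ D) [H.Additive] (X Y : C) [HasBinaryBiproduct X Y] {Z : D}
    (f g : Z ⟶ H.obj (X ⊞ Y)) (h1 : f ≫ H.map biprod.fst = g ≫ H.map biprod.fst)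
    (h2 : f ≫ H.map biprod.snd = g ≫ H.map biprod.snd) :
    f = g := by
  have key : ∀ f : Z ⟶ H.obj (X ⊞ Y),
      f = (f ≫ H.map biprod.fst) ≫ H.map biprod.inl + (f ≫ H.map biprod.snd) ≫ H.map biprod.inr := by
    intro f
    simp only [Category.assoc, ← Functor.map_comp]
    rw [← Preadditive.comp_add, ← Functor.map_add, biprod.total]
    simp
  rw [key f, key g, h1, h2]

theorem map_biprod3_hom_ext {C D : Type*} [Category C] [Category D] [Preadditive C] [Preadditive D]
    (H : C ⥤ D) [H.Additive] {J : Type} [Finite J] (X : C) (Y : J → C) [HasBiproduct Y]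
    [HasBinaryBiproduct X (⨁ Y)] {Z : D}
    (f g : Z ⟶ H.obj (X ⊞ (⨁ Y))) (h1 : f ≫ H.map biprod.fst = g ≫ H.map biprod.fst)
    (h2 : ∀ l, f ≫ H.map (biprod.snd ≫ biproduct.π Y l) =
      g ≫ H.map (biprod.snd ≫ biproduct.π Y l)) :
    f = g := by
  refine map_biprod2_hom_ext H _ _ f g h1 (map_biprod_hom_ext H _ _ _ fun l => ?_)
  rw [Category.assoc, Category.assoc, ← Functor.map_comp]
  exact h2 l

/-- the projection of `VObj` -/
noncomputable def vpi (X : Comod F δ (lowSet n m)) (j : highSet n m) (i : lowSet n m) :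
    VObj F δ X j ⟶ (F (low_lt_high i j)).obj (X.X i) :=
  biproduct.π (fun i : lowSet n m => (F (low_lt_high i j)).obj (X.X i)) i

/-- the projection of `WObj` -/
noncomputable def wpi (X : Comod F δ (lowSet n m)) (j : highSet n m) (k : lowSet n m) :
    WObj F δ X j ⟶ (F (low_lt_high k j)).obj (Glow F δ X k) :=
  biproduct.π (fun k : lowSet n m => (F (low_lt_high k j)).obj (Glow F δ X k)) k

/-- the first projection of `Glow` -/
noncomputable def gfst (X : Comod F δ (lowSet n m)) (k : lowSet n m) :
    Glow F δ X k ⟶ X.X k := biprod.fst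

/-- the other projections of `Glow` -/
noncomputable def gsnd (X : Comod F δ (lowSet n m)) (k : lowSet n m)
    (l : {i : lowSet n m // i.1 < k.1}) :
    Glow F δ X k ⟶ (F l.2).obj (X.X l.1) :=
  biprod.snd ≫ biproduct.π (fun i : {i : lowSet n m // i.1 < k.1} => (F i.2).obj (X.X i.1)) l

/-- lifting to `VObj` -/
noncomputable def vlift (X : Comod F δ (lowSet n m)) (j : highSet n m) {Z : A j.1}
    (u : ∀ i, Z ⟶ (F (low_lt_high i j)).obj (X.X i)) : Z ⟶ VObj F δ X j :=
  biproduct.lift u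

theorem vlift_pi (X : Comod F δ (lowSet n m)) (j : highSet n m) {Z : A j.1}
    (u : ∀ i, Z ⟶ (F (low_lt_high i j)).obj (X.X i)) (i : lowSet n m) :
    vlift F δ X j u ≫ vpi F δ X j i = u i :=
  biproduct.lift_π u i

theorem v_ext (X : Comod F δ (lowSet n m)) (j : highSet n m) {Z : A j.1}
    (f g : Z ⟶ VObj F δ X j) (h : ∀ i, f ≫ vpi F δ X j i = g ≫ vpi F δ X j i) : f = g :=
  biproduct.hom_ext _ _ h

theorem w_ext (X : Comod F δ (lowSet n m)) (j : highSet n m) {Z : A j.1}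
    (f g : Z ⟶ WObj F δ X j) (h : ∀ i, f ≫ wpi F δ X j i = g ≫ wpi F δ X j i) : f = g :=
  biproduct.hom_ext _ _ h

theorem map_v_ext (hadd : ∀ ⦃i j : Fin n⦄ (h : i < j), (F h).Additive)
    (X : Comod F δ (lowSet n m)) (j k : highSet n m) (hjk : j.1 < k.1) {Z : A k.1}
    (f g : Z ⟶ (F hjk).obj (VObj F δ X j))
    (h : ∀ i, f ≫ (F hjk).map (vpi F δ X j i) = g ≫ (F hjk).map (vpi F δ X j i)) : f = g := by
  have := hadd hjk
  exact map_biprod_hom_ext (F hjk) _ f g h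

theorem map_g_ext (hadd : ∀ ⦃i j : Fin n⦄ (h : i < j), (F h).Additive)
    (X : Comod F δ (lowSet n m)) (k : lowSet n m) (j : Fin n) (hkj : k.1 < j) {Z : A j}
    (f g : Z ⟶ (F hkj).obj (Glow F δ X k))
    (h1 : f ≫ (F hkj).map (gfst F δ X k) = g ≫ (F hkj).map (gfst F δ X k))
    (h2 : ∀ l, f ≫ (F hkj).map (gsnd F δ X k l) = g ≫ (F hkj).map (gsnd F δ X k l)) : f = g := by
  have := hadd hkj
  exact map_biprod3_hom_ext (F hkj) _ _ f g h1 h2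

theorem coact_fst (X : Comod F δ (lowSet n m)) (k : lowSet n m) :
    coact F δ X k ≫ gfst F δ X k = 𝟙 _ :=
  biprod.lift_fst _ _

theorem coact_snd (X : Comod F δ (lowSet n m)) (k : lowSet n m)
    (l : {i : lowSet n m // i.1 < k.1}) :
    coact F δ X k ≫ gsnd F δ X k l = X.d l.2 := by
  delta coact gsnd Glow
  rw [biprod.lift_snd_assoc, biproduct.lift_π]

theorem Vmap_pi {X Y : Comod F δ (lowSet n m)} (f : X ⟶ Y) (j : highSet n m) (i : lowSet n m) :
    Vmap F δ f j ≫ vpi F δ Y j i = vpi F δ X j i ≫ (F (low_lt_high i j)).map (f.f i) :=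
  biproduct.map_π (fun i => (F (low_lt_high i j)).map (f.f i)) i

theorem psi_pi (X : Comod F δ (lowSet n m)) (j : highSet n m) (k : lowSet n m) :
    psi F δ X j ≫ wpi F δ X j k =
      vpi F δ X j k ≫ (F (low_lt_high k j)).map (coact F δ X k) := by
  delta psi vpi wpi VObj WObj
  apply biproduct.hom_ext'
  intro i
  rw [biproduct.matrix_π, biproduct.ι_desc]
  by_cases h : i = k
  · subst h
    simp
  · rw [dif_neg h, biproduct.ι_π_ne_assoc _ h, zero_comp]

theorem phi_pi_fst (hadd : ∀ ⦃i j : Fin n⦄ (h : i < j), (F h).Additive)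
    (X : Comod F δ (lowSet n m)) (j : highSet n m) (k : lowSet n m) :
    phi F δ X j ≫ wpi F δ X j k ≫ (F (low_lt_high k j)).map (gfst F δ X k) = vpi F δ X j k := by
  have := hadd (low_lt_high k j)
  delta phi vpi wpi gfst VObj WObj Glow
  apply biproduct.hom_ext'
  intro i
  rw [biproduct.matrix_π_assoc, biproduct.ι_desc_assoc]
  by_cases h : i = k
  · subst h
    simp [← Functor.map_comp]
  · rw [biproduct.ι_π_ne _ h]
    by_cases h' : i.1 < k.1
    · simp [h', ← Functor.map_comp]
    · simp [h', h]

theorem phi_pi_snd (hadd : ∀ ⦃i j : Fin n⦄ (h : i < j), (F h).Additive)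
    (X : Comod F δ (lowSet n m)) (j : highSet n m) (k : lowSet n m)
    (l : {i : lowSet n m // i.1 < k.1}) :
    phi F δ X j ≫ wpi F δ X j k ≫ (F (low_lt_high k j)).map (gsnd F δ X k l) =
      vpi F δ X j l.1 ≫ (δ l.2 (low_lt_high k j)).app (X.X l.1) := by
  have := hadd (low_lt_high k j)
  delta phi vpi wpi gsnd VObj WObj Glow
  apply biproduct.hom_ext'
  intro i
  rw [biproduct.matrix_π_assoc, biproduct.ι_desc_assoc]
  by_cases h' : i.1 < k.1
  · rw [dif_pos h', Category.assoc, ← Functor.map_comp]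
    by_cases h : i = l.1
    · obtain ⟨l, hl⟩ := l
      dsimp only at h
      subst h
      simp
    · have : (⟨i, h'⟩ : {i : lowSet n m // i.1 < k.1}) ≠ l := fun hh => h (by rw [← hh])
      rw [biproduct.ι_π_ne_assoc _ h]
      simp [biproduct.ι_π_ne _ this]
  · have h : i ≠ l.1 := fun hh => h' (hh ▸ l.2)
    rw [biproduct.ι_π_ne_assoc _ h, dif_neg h']
    by_cases h2 : i = k
    · subst h2
      simp [← Functor.map_comp]
    · simp [h2]

theorem equalizes_iff (hadd : ∀ ⦃i j : Fin n⦄ (h : i < j), (F h).Additive)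
    (X : Comod F δ (lowSet n m)) (j : highSet n m) {Z : A j.1} (w : Z ⟶ VObj F δ X j) :
    w ≫ phi F δ X j = w ≫ psi F δ X j ↔
      ∀ (i k : lowSet n m) (h : i.1 < k.1),
        w ≫ vpi F δ X j k ≫ (F (low_lt_high k j)).map (X.d h) =
        w ≫ vpi F δ X j i ≫ (δ h (low_lt_high k j)).app (X.X i) := by
  constructor
  · intro hw i k h
    rw [← phi_pi_snd F δ hadd X j k ⟨i, h⟩, reassoc_of% hw, reassoc_of% (psi_pi F δ X j k),
      ← Functor.map_comp, coact_snd]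
  · intro hw
    apply w_ext
    intro k
    apply map_g_ext F δ hadd
    · have h1 := phi_pi_fst F δ hadd X j k
      have h2 := psi_pi F δ X j k
      simp only [Category.assoc]
      rw [h1, reassoc_of% h2, ← Functor.map_comp, coact_fst, CategoryTheory.Functor.map_id,
        Category.comp_id]
    · intro l
      have h1 := phi_pi_snd F δ hadd X j k l
      have h2 := psi_pi F δ X j k
      simp only [Category.assoc]
      rw [h1, reassoc_of% h2, ← Functor.map_comp, ← hw _ _ l.2, coact_snd]

theorem lamV_pi (hadd : ∀ ⦃i j : Fin n⦄ (h : i < j), (F h).Additive)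
    (X : Comod F δ (lowSet n m)) (j k : highSet n m) (h : j.1 < k.1) (i : lowSet n m) :
    lamV F δ X j k h ≫ (F h).map (vpi F δ X j i) =
      vpi F δ X k i ≫ (δ (low_lt_high i j) h).app (X.X i) := by
  have := hadd h
  delta lamV vpi VObj
  apply biproduct.hom_ext'
  intro l
  rw [biproduct.ι_desc_assoc, Category.assoc, ← Functor.map_comp]
  by_cases hl : l = i
  · subst hl
    simp
  · rw [biproduct.ι_π_ne _ hl, biproduct.ι_π_ne_assoc _ hl]
    simp


/-- the structure map from the equalizer -/
noncomputable def tc {M : Comod F δ (lowSet n m)} {N : Comod F δ (highSet n m)}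
    (e : ∀ j : highSet n m, N.X j ⟶ VObj F δ M j)
    (i : lowSet n m) (j : highSet n m) :
    N.X j ⟶ (F (low_lt_high i j)).obj (M.X i) := e j ≫ vpi F δ M j i

/-- glueing along a morphism to the equalizer -/
noncomputable def tGlue (hadd : ∀ ⦃i j : Fin n⦄ (h : i < j), (F h).Additive)
    {M : Comod F δ (lowSet n m)} {N : Comod F δ (highSet n m)}
    (e : ∀ j : highSet n m, N.X j ⟶ VObj F δ M j)
    (hw : ∀ j, e j ≫ phi F δ M j = e j ≫ psi F δ M j)
    (hco : ∀ (j k : highSet n m) (h : j.1 < k.1),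
      N.d h ≫ (F h).map (e j) = e k ≫ lamV F δ M j k h)
    {N' : Comod F δ (highSet n m)} (t : N' ⟶ N) :
    Glue F δ M N' (fun i j => t.f j ≫ tc F δ e i j) :=
  glue F δ M N' _
    (fun i k j h => by
      have := (equalizes_iff F δ hadd M j (e j)).mp (hw j) i k h
      simp only [tc, Category.assoc]
      rw [this])
    (fun i j k h => by
      have h1 := t.comm h
      have h2 := lamV_pi F δ hadd M j k h i
      simp only [tc, Category.assoc, Functor.map_comp]
      rw [← reassoc_of% h1, reassoc_of% (hco j k h), h2])

theorem e_mono {M : Comod F δ (lowSet n m)} {N : Comod F δ (highSet n m)}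
    (e : ∀ j : highSet n m, N.X j ⟶ VObj F δ M j)
    (hw : ∀ j, e j ≫ phi F δ M j = e j ≫ psi F δ M j)
    (hlim : ∀ j, Nonempty (IsLimit (Fork.ofι (e j) (hw j))))
    (j : highSet n m) : Mono (e j) := by
  obtain ⟨hl⟩ := hlim j
  exact mono_of_isLimit_fork hl

theorem tGlue_unique {M : Comod F δ (lowSet n m)} {N : Comod F δ (highSet n m)}
    (e : ∀ j : highSet n m, N.X j ⟶ VObj F δ M j)
    (hw : ∀ j, e j ≫ phi F δ M j = e j ≫ psi F δ M j)
    (hlim : ∀ j, Nonempty (IsLimit (Fork.ofι (e j) (hw j))))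
    (t : N ⟶ N) (ht : t = 𝟙 N)
    (Gl : Glue F δ M N (fun i j => t.f j ≫ tc F δ e i j))
    {Z : Comod F δ (Set.univ : Set (Fin n))} (a b : Z ⟶ Gl.G)
    (hab : ∀ i : lowSet n m, a.f (full i.1) = b.f (full i.1)) : a = b := by
  subst ht
  refine hom_ext_lh F δ m a b hab fun j => ?_
  have := e_mono F δ e hw hlim j
  rw [← cancel_mono (Gl.hi j).hom, ← cancel_mono (e j)]
  apply v_ext
  intro i
  have key : ∀ a : Z ⟶ Gl.G, ((a.f (full j.1) ≫ (Gl.hi j).hom) ≫ e j) ≫ vpi F δ M j i =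
      Z.d (i := full i.1) (j := full j.1) (low_lt_high i j) ≫
        (F (low_lt_high i j)).map (a.f (full i.1) ≫ (Gl.lo i).hom) := by
    intro a
    have h1 := a.comm (i := full i.1) (j := full j.1) (low_lt_high i j)
    rw [Gl.hLH i j (low_lt_high i j)] at h1
    rw [Functor.map_comp, ← reassoc_of% h1, ← Functor.map_comp, Iso.inv_hom_id,
      CategoryTheory.Functor.map_id]
    simp [tc, comod_id_f]
  rw [key a, key b, hab i]

theorem tGlue_exists (hadd : ∀ ⦃i j : Fin n⦄ (h : i < j), (F h).Additive)
    (hlex : ∀ ⦃i j : Fin n⦄ (h : i < j), PreservesFiniteLimits (F h))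
    {M : Comod F δ (lowSet n m)} {N : Comod F δ (highSet n m)}
    (e : ∀ j : highSet n m, N.X j ⟶ VObj F δ M j)
    (hw : ∀ j, e j ≫ phi F δ M j = e j ≫ psi F δ M j)
    (hlim : ∀ j, Nonempty (IsLimit (Fork.ofι (e j) (hw j))))
    (hco : ∀ (j k : highSet n m) (h : j.1 < k.1),
      N.d h ≫ (F h).map (e j) = e k ≫ lamV F δ M j k h)
    (t : N ⟶ N) (ht : t = 𝟙 N)
    (Gl : Glue F δ M N (fun i j => t.f j ≫ tc F δ e i j))
    (Z : Comod F δ (Set.univ : Set (Fin n))) (g : resL F δ m Z ⟶ M) :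
    ∃ a : Z ⟶ Gl.G, ∀ i : lowSet n m, a.f (full i.1) = g.f i ≫ (Gl.lo i).inv := by
  subst ht
  have hg : ∀ (i k : lowSet n m) (h : i.1 < k.1),
      g.f k ≫ M.d h = Z.d (i := full i.1) (j := full k.1) h ≫ (F h).map (g.f i) :=
    fun i k h => g.comm h
  let u : ∀ j : highSet n m, Z.X (full j.1) ⟶ VObj F δ M j := fun j =>
    vlift F δ M j fun i => Z.d (i := full i.1) (j := full j.1) (low_lt_high i j) ≫
      (F (low_lt_high i j)).map (g.f i)
  have hu : ∀ j i, u j ≫ vpi F δ M j i =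
      Z.d (i := full i.1) (j := full j.1) (low_lt_high i j) ≫
      (F (low_lt_high i j)).map (g.f i) := fun j i => vlift_pi F δ M j _ i
  have huw : ∀ j, u j ≫ phi F δ M j = u j ≫ psi F δ M j := by
    intro j
    rw [equalizes_iff F δ hadd]
    intro i k h
    have h3 := Z.compat (i := full i.1) (k := full k.1) (j := full j.1) h (low_lt_high k j)
    have h4 := (δ h (low_lt_high k j)).naturality (g.f i)
    rw [reassoc_of% (hu j k), reassoc_of% (hu j i), ← Functor.map_comp, hg, Functor.map_comp,
      reassoc_of% h3, h4]
    rfl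
  have hl : ∀ j, ∃ l : Z.X (full j.1) ⟶ N.X j, l ≫ e j = u j := by
    intro j
    obtain ⟨hl⟩ := hlim j
    exact ⟨_, (Fork.IsLimit.lift' hl (u j) (huw j)).2⟩
  choose l hl using hl
  refine ⟨mkHom F δ Z Gl.G (fun i => g.f i ≫ (Gl.lo i).inv) (fun j => l j ≫ (Gl.hi j).inv)
    ?_ ?_ ?_, fun i => mkHom_lo F δ _ _ _ _ _ i⟩
  · intro i j h
    rw [Gl.hLL]
    simp only [Category.assoc, Iso.inv_hom_id_assoc, Functor.map_comp]
    rw [reassoc_of% (hg i j h)]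
  · intro i j h
    rw [Gl.hLH]
    simp only [Category.assoc, Iso.inv_hom_id_assoc, Functor.map_comp, comod_id_f, tc,
      Category.id_comp]
    rw [reassoc_of% (hl j), reassoc_of% (hu j i)]
  · intro i j h
    rw [Gl.hHH]
    simp only [Category.assoc, Iso.inv_hom_id_assoc, Functor.map_comp]
    rw [← Category.assoc, ← Category.assoc]
    congr 1
    have := hlex h
    have := e_mono F δ e hw hlim i
    rw [← cancel_mono ((F h).map (e i))]
    apply map_v_ext F δ hadd
    intro k
    have h1 := lamV_pi F δ hadd M i j h k
    have h3 := Z.compat (i := full k.1) (k := full i.1) (j := full j.1) (low_lt_high k i) h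
    have h4 := (δ (low_lt_high k i) h).naturality (g.f k)
    simp only [Category.assoc]
    rw [reassoc_of% (hco i j h), h1, reassoc_of% (hl j), reassoc_of% (hu j k), h4,
      ← Functor.map_comp, ← Functor.map_comp, reassoc_of% (hl i), hu, Functor.map_comp,
      reassoc_of% h3]
    rfl

theorem tGlue_injective (hadd : ∀ ⦃i j : Fin n⦄ (h : i < j), (F h).Additive)
    (hlex : ∀ ⦃i j : Fin n⦄ (h : i < j), PreservesFiniteLimits (F h))
    {M : Comod F δ (lowSet n m)} {N : Comod F δ (highSet n m)}
    (e : ∀ j : highSet n m, N.X j ⟶ VObj F δ M j)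
    (hw : ∀ j, e j ≫ phi F δ M j = e j ≫ psi F δ M j)
    (hlim : ∀ j, Nonempty (IsLimit (Fork.ofι (e j) (hw j))))
    (hco : ∀ (j k : highSet n m) (h : j.1 < k.1),
      N.d h ≫ (F h).map (e j) = e k ≫ lamV F δ M j k h)
    (t : N ⟶ N) (ht : t = 𝟙 N)
    (Gl : Glue F δ M N (fun i j => t.f j ≫ tc F δ e i j)) (hM : Injective M) :
    Injective Gl.G := by
  constructor
  intro Z W g f hf
  have := resLMap_mono F δ m f
  let gL : resL F δ m Z ⟶ M :=
    { f := fun i => g.f (full i.1) ≫ (Gl.lo i).hom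
      comm := by
        intro i j h
        have h1 := g.comm (i := full i.1) (j := full j.1) h
        rw [Gl.hLL i j h] at h1
        rw [Functor.map_comp, ← reassoc_of% h1, ← Functor.map_comp, Iso.inv_hom_id,
          CategoryTheory.Functor.map_id]
        simp }
  obtain ⟨a, ha⟩ := tGlue_exists F δ hadd hlex e hw hlim hco t ht Gl W
    (Injective.factorThru gL (resLMap F δ m f))
  refine ⟨a, tGlue_unique F δ e hw hlim t ht Gl _ _ fun i => ?_⟩
  have h1 := congrArg (fun t => ComodHom.f t i)
    (Injective.comp_factorThru gL (resLMap F δ m f))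
  have h2 : f.f (full i.1) ≫ (Injective.factorThru gL (resLMap F δ m f)).f i =
    g.f (full i.1) ≫ (Gl.lo i).hom := h1
  rw [comod_comp_f, ha, reassoc_of% h2, Iso.hom_inv_id, Category.comp_id]

theorem stmt_16
    -- coassociativity of the comonad data:
    (hδ : ∀ ⦃i k l j : Fin n⦄ (h₁ : i < k) (h₂ : k < l) (h₃ : l < j) (X : A i),
      (δ h₁ (h₂.trans h₃)).app X ≫ (δ h₂ h₃).app ((F h₁).obj X) =
        (δ (h₁.trans h₂) h₃).app X ≫ (F h₃).map ((δ h₁ h₂).app X))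
    -- the functors `F_{ij}` are additive and left exact:
    (hadd : ∀ ⦃i j : Fin n⦄ (h : i < j), (F h).Additive)
    (hlex : ∀ ⦃i j : Fin n⦄ (h : i < j), PreservesFiniteLimits (F h))
    -- the functors `T^m`, together with the data exhibiting the underlying object of
    -- `T^m X` at each index `j > m` as the equalizer of `φ = ρ^{V^m}` and
    -- `ψ = V^m(d_X)`, naturally in `X` and compatibly with the induced coactions:
    (T : ∀ (m : ℕ), 1 ≤ m → m < n →
      (Comod F δ (lowSet n m) ⥤ Comod F δ (highSet n m)))
    (e : ∀ (m : ℕ) (h₁ : 1 ≤ m) (h₂ : m < n) (X : Comod F δ (lowSet n m))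
      (j : highSet n m), ((T m h₁ h₂).obj X).X j ⟶ VObj F δ X j)
    (hw : ∀ (m : ℕ) (h₁ : 1 ≤ m) (h₂ : m < n) (X : Comod F δ (lowSet n m))
      (j : highSet n m),
      e m h₁ h₂ X j ≫ phi F δ X j = e m h₁ h₂ X j ≫ psi F δ X j)
    (hlim : ∀ (m : ℕ) (h₁ : 1 ≤ m) (h₂ : m < n) (X : Comod F δ (lowSet n m))
      (j : highSet n m),
      Nonempty (IsLimit (Fork.ofι (e m h₁ h₂ X j) (hw m h₁ h₂ X j))))
    (hnat : ∀ (m : ℕ) (h₁ : 1 ≤ m) (h₂ : m < n) (X Y : Comod F δ (lowSet n m))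
      (f : X ⟶ Y) (j : highSet n m),
      ((T m h₁ h₂).map f).f j ≫ e m h₁ h₂ Y j = e m h₁ h₂ X j ≫ Vmap F δ f j)
    (hcoact : ∀ (m : ℕ) (h₁ : 1 ≤ m) (h₂ : m < n) (X : Comod F δ (lowSet n m))
      (j k : highSet n m) (h : j.1 < k.1),
      ((T m h₁ h₂).obj X).d h ≫ (F h).map (e m h₁ h₂ X j) =
        e m h₁ h₂ X k ≫ lamV F δ X j k h)
    -- the category of `F`-comodules is hereditary:
    (hH : Hereditary (Comod F δ Set.univ))
    -- then `T^m` sends epimorphisms between injective comodules to split epimorphisms: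
    (m : ℕ) (h₁ : 1 ≤ m) (h₂ : m < n)
    (E E' : Comod F δ (lowSet n m)) (p : E ⟶ E') (hp : Epi p)
    (hE : Injective E) (hE' : Injective E') :
    IsSplitEpi ((T m h₁ h₂).map p) := by
  let t := (T m h₁ h₂).map p
  have hcE := hcoact m h₁ h₂ E
  have hcE' := hcoact m h₁ h₂ E'
  let GE := tGlue F δ hadd (e m h₁ h₂ E) (hw m h₁ h₂ E) hcE (𝟙 ((T m h₁ h₂).obj E))
  let Q := tGlue F δ hadd (e m h₁ h₂ E') (hw m h₁ h₂ E') hcE' t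
  let R := tGlue F δ hadd (e m h₁ h₂ E') (hw m h₁ h₂ E') hcE' (𝟙 ((T m h₁ h₂).obj E'))
  let P := extZero F δ E'
  have hGE : Injective GE.G := tGlue_injective F δ hadd hlex (e m h₁ h₂ E) (hw m h₁ h₂ E)
    (hlim m h₁ h₂ E) hcE (𝟙 _) rfl GE hE
  let q : GE.G ⟶ Q.G := mkHom F δ _ _
    (fun i => (GE.lo i).hom ≫ p.f i ≫ (Q.lo i).inv)
    (fun j => (GE.hi j).hom ≫ (Q.hi j).inv)
    (fun i j h => by
      have h1 := p.comm h
      rw [Q.hLL, GE.hLL]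
      simp only [Category.assoc, Iso.inv_hom_id_assoc, ← Functor.map_comp]
      simp only [Functor.map_comp]
      rw [reassoc_of% h1])
    (fun i j h => by
      have h1 := hnat m h₁ h₂ E E' p j
      have h2 := Vmap_pi F δ p j i
      rw [Q.hLH, GE.hLH]
      simp only [Category.assoc, Iso.inv_hom_id_assoc, ← Functor.map_comp]
      simp only [Functor.map_comp, tc, comod_id_f, Category.id_comp, Category.assoc]
      rw [reassoc_of% h1, reassoc_of% h2])
    (fun i j h => by
      rw [Q.hHH, GE.hHH]
      simp only [Category.assoc, Iso.inv_hom_id_assoc, ← Functor.map_comp])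
  have hq : Epi q := by
    constructor
    intro Z a b hab
    let r : (Q.G ⟶ Z) → (E' ⟶ resL F δ m Z) := fun a =>
      { f := fun i => (Q.lo i).inv ≫ a.f (full i.1)
        comm := by
          intro i j h
          have h1 := a.comm (i := full i.1) (j := full j.1) h
          rw [Q.hLL i j h] at h1
          rw [Category.assoc]
          refine (congrArg ((Q.lo j).inv ≫ ·) h1).trans ?_
          simp }
    have hr : r a = r b := by
      rw [← cancel_epi p]
      apply ComodHom.ext
      funext i
      have h1 := congrArg (fun t => ComodHom.f t (full i.1)) hab
      dsimp only at h1
      rw [comod_comp_f, comod_comp_f, mkHom_lo] at h1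
      simp only [Category.assoc, cancel_epi] at h1
      exact h1
    apply hom_ext_lh F δ m
    · intro i
      have h1 : (Q.lo i).inv ≫ a.f (full i.1) = (Q.lo i).inv ≫ b.f (full i.1) :=
        congrArg (fun t => ComodHom.f t i) hr
      exact (cancel_epi _).mp h1
    · intro j
      have h1 := congrArg (fun t => ComodHom.f t (full j.1)) hab
      dsimp only at h1
      rw [comod_comp_f, comod_comp_f, mkHom_hi, cancel_epi] at h1
      exact h1
  have hQ : Injective Q.G := hH q hq hGE
  have hPhi : ∀ j : highSet n m, IsZero (P.G.X (full j.1)) := extZero_hi F δ E'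
  have incl : ∀ {N : Comod F δ (highSet n m)} {c} (G : Glue F δ E' N c),
      ∃ a : P.G ⟶ G.G, ∀ i : lowSet n m, a.f (full i.1) = (P.lo i).hom ≫ (G.lo i).inv := by
    intro N c G
    refine ⟨mkHom F δ _ _ (fun i => (P.lo i).hom ≫ (G.lo i).inv) (fun j => 0) ?_ ?_ ?_,
      fun i => mkHom_lo F δ _ _ _ _ _ i⟩
    · intro i j h
      rw [G.hLL, P.hLL]
      simp only [Category.assoc, Iso.inv_hom_id_assoc, ← Functor.map_comp]
    · intro i j h
      exact (hPhi j).eq_of_src _ _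
    · intro i j h
      exact (hPhi j).eq_of_src _ _
  obtain ⟨iR, hiR⟩ := incl R
  obtain ⟨iQ, hiQ⟩ := incl Q
  have hmono : Mono iR := by
    constructor
    intro Z a b hab
    apply hom_ext_lh F δ m
    · intro i
      have h1 := congrArg (fun t => ComodHom.f t (full i.1)) hab
      dsimp only at h1
      rw [comod_comp_f, comod_comp_f, hiR, cancel_mono] at h1
      exact h1
    · intro j
      exact (hPhi j).eq_of_tgt _ _
  obtain ⟨φ, hφ⟩ := hQ.factors iQ iR
  have hφl : ∀ i : lowSet n m, φ.f (full i.1) = (R.lo i).hom ≫ (Q.lo i).inv := by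
    intro i
    have h1 := congrArg (fun t => ComodHom.f t (full i.1)) hφ
    dsimp only at h1
    rw [comod_comp_f, hiR, hiQ, Category.assoc, cancel_epi] at h1
    rw [← h1, Iso.hom_inv_id_assoc]
  let s : (T m h₁ h₂).obj E' ⟶ (T m h₁ h₂).obj E :=
    { f := fun j => (R.hi j).inv ≫ φ.f (full j.1) ≫ (Q.hi j).hom
      comm := by
        intro i j h
        have h1 := φ.comm (i := full i.1) (j := full j.1) h
        rw [Q.hHH i j h, R.hHH i j h] at h1
        have h2 := congrArg (fun z => (R.hi j).inv ≫ z ≫ (F h).map (Q.hi i).hom) h1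
        dsimp only at h2
        simp only [Category.assoc, Iso.inv_hom_id_assoc, ← Functor.map_comp, Iso.inv_hom_id,
          CategoryTheory.Functor.map_id, Category.comp_id] at h2
        simp only [Category.assoc]
        exact h2 }
  refine ⟨⟨s, ?_⟩⟩
  apply ComodHom.ext
  funext j
  have := e_mono F δ (e m h₁ h₂ E') (hw m h₁ h₂ E') (hlim m h₁ h₂ E') j
  rw [← cancel_mono (e m h₁ h₂ E' j)]
  apply v_ext
  intro i
  have h1 := φ.comm (i := full i.1) (j := full j.1) (low_lt_high i j)
  rw [Q.hLH i j, R.hLH i j, hφl] at h1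
  have h2 := congrArg (fun z => (R.hi j).inv ≫ z ≫ (F (low_lt_high i j)).map (Q.lo i).hom) h1
  dsimp only at h2
  simp only [Category.assoc, Iso.inv_hom_id_assoc, ← Functor.map_comp, Iso.inv_hom_id,
    CategoryTheory.Functor.map_id, Category.comp_id, tc, comod_id_f, Category.id_comp] at h2
  rw [comod_comp_f, comod_id_f, Category.id_comp]
  simp only [s, Category.assoc]
  exact h2
end

section
/- The comodule category A_F of the normal triangular matrix comonad F is hereditary if and only if the following four conditions hold: (a) T^{n−1} sends injective F^{≤n−1}-comodules to injective objects of Aₙ, and every F_{ij} (i < j) sends injective objects of A_i to injective objects of A_j; (b) for each 1 ≤ m ≤ n−1, T^m sends every epimorphism between injective F^{≤m}-comodules to a split epimorphism; (c) for all i < j < k and every injective object E_i of A_i, the morphism δ^{ijk}_{E_i} : F_{ik}(E_i) ⟶ F_{jk}(F_{ij}(E_i)) is a split epimorphism; (d) each category A_i is hereditary. -/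
/-!
STATEMENT 17: The category of comodules over a normal triangular matrix comonad `F`
on `A₁ × ⋯ × Aₙ` is hereditary if and only if:
(a) `T^{n−1}` preserves injectives (its target, the category of `F^{>n-1}`-comodules,
    is isomorphic to `Aₙ` via the forgetful functor) and every `F_{ij}` (`i < j`)
    preserves injectives;
(b) for each `1 ≤ m ≤ n−1`, `T^m` sends every epimorphism between injective
    `F^{≤m}`-comodules to a split epimorphism;
(c) for all `i < j < k` and every injective `E` in `A_i`, `δ^{ijk}_E` is a split
    epimorphism; and
(d) each `A_i` is hereditary.
The functors `T^m` are presented through the data characterising them: the underlying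
object of `T^m X` at each index `j > m` is the equalizer of `φ = ρ^{V^m}` and
`ψ = V^m(d_X)`, naturally in `X` and compatibly with the induced coactions.
-/

open CategoryTheory Limits

universe v u

attribute [local instance] CategoryTheory.Abelian.hasFiniteBiproducts
attribute [local instance] CategoryTheory.Limits.hasBinaryBiproducts_of_finite_biproducts

variable {n : ℕ} {A : Fin n → Type u} [∀ i, Category.{v} (A i)]
  [∀ i, Abelian (A i)] [∀ i, EnoughInjectives (A i)]
variable (F : ∀ ⦃i j : Fin n⦄, i < j → (A i ⥤ A j))
variable (δ : ∀ ⦃i k j : Fin n⦄ (h₁ : i < k) (h₂ : k < j), F (h₁.trans h₂) ⟶ F h₁ ⋙ F h₂)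

variable {m : ℕ}

section helpers

set_option linter.unusedSectionVars false
open scoped ZeroObject

variable {F δ}
variable {s t u : Set (Fin n)}

namespace Comod

@[simp] lemma comp_f {M N P : Comod F δ s} (f : M ⟶ N) (g : N ⟶ P) (i : s) :
    (f ≫ g).f i = f.f i ≫ g.f i := rfl

@[simp] lemma id_f (M : Comod F δ s) (i : s) : (𝟙 M : M ⟶ M).f i = 𝟙 (M.X i) := rfl

lemma hext {M N : Comod F δ s} {f g : M ⟶ N} (h : ∀ i, f.f i = g.f i) : f = g :=
  ComodHom.ext (funext h)

lemma congr_f {M N : Comod F δ s} {f g : M ⟶ N} (h : f = g) (i : s) : f.f i = g.f i := by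
  rw [h]

/-- Restriction to a smaller index set. -/
abbrev res (hsu : ∀ ⦃i⦄, i ∈ s → i ∈ u) (M : Comod F δ u) : Comod F δ s where
  X i := M.X ⟨i.1, hsu i.2⟩
  d {i j} h := M.d (i := ⟨i.1, hsu i.2⟩) (j := ⟨j.1, hsu j.2⟩) h
  compat {i k j} h₁ h₂ := M.compat (i := ⟨i.1, hsu i.2⟩) (k := ⟨k.1, hsu k.2⟩)
    (j := ⟨j.1, hsu j.2⟩) h₁ h₂

/-- Restriction of morphisms. -/
def resMap (hsu : ∀ ⦃i⦄, i ∈ s → i ∈ u) {M N : Comod F δ u} (f : M ⟶ N) : res hsu M ⟶ res hsu N where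
  f i := f.f ⟨i.1, hsu i.2⟩
  comm {i j} h := f.comm (i := ⟨i.1, hsu i.2⟩) (j := ⟨j.1, hsu j.2⟩) h

@[simp] lemma resMap_f (hsu : ∀ ⦃i⦄, i ∈ s → i ∈ u) {M N : Comod F δ u} (f : M ⟶ N) (i : s) :
    (resMap hsu f).f i = f.f ⟨i.1, hsu i.2⟩ := rfl

lemma mono_of {M N : Comod F δ s} (f : M ⟶ N) (h : ∀ i, Mono (f.f i)) : Mono f :=
  ⟨fun g g' e => hext fun i => by
    have := h i
    have := congr_f e i
    simp only [comp_f] at this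
    exact (cancel_mono (f.f i)).1 this⟩

lemma epi_of {M N : Comod F δ s} (f : M ⟶ N) (h : ∀ i, Epi (f.f i)) : Epi f :=
  ⟨fun g g' e => hext fun i => by
    have := h i
    have := congr_f e i
    simp only [comp_f] at this
    exact (cancel_epi (f.f i)).1 this⟩

lemma inj_of_retract {C : Type*} [Category C] {X Y : C} (i : X ⟶ Y) (r : Y ⟶ X)
    (h : i ≫ r = 𝟙 X) (hY : Injective Y) : Injective X :=
  ⟨fun g f _ => ⟨Injective.factorThru (g ≫ i) f ≫ r, by simp [h]⟩⟩

variable [hadd : ∀ {i j : Fin n} (h : i < j), (F h).Additive]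

/-- The zero morphism. -/
def zeroHom (M N : Comod F δ s) : M ⟶ N where
  f _ := 0
  comm h := by simp

/-- The zero comodule. -/
noncomputable abbrev zeroObj (F : ∀ ⦃i j : Fin n⦄, i < j → (A i ⥤ A j))
    (δ : ∀ ⦃i k j : Fin n⦄ (h₁ : i < k) (h₂ : k < j), F (h₁.trans h₂) ⟶ F h₁ ⋙ F h₂)
    (s : Set (Fin n)) : Comod F δ s where
  X _ := 0
  d _ := 0
  compat _ _ := by simp

section ker

variable [hlex : ∀ {i j : Fin n} (h : i < j), PreservesFiniteLimits (F h)]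

/-- The structure maps of the kernel comodule. -/
noncomputable def kerD {M N : Comod F δ s} (f : M ⟶ N) {i j : s} (h : i.1 < j.1) :
    kernel (f.f j) ⟶ (F h).obj (kernel (f.f i)) :=
  kernel.lift ((F h).map (f.f i)) (kernel.ι (f.f j) ≫ M.d h)
    (by rw [Category.assoc, ← f.comm, kernel.condition_assoc, zero_comp]) ≫
    (PreservesKernel.iso (F h) (f.f i)).inv

lemma kerD_ι {M N : Comod F δ s} (f : M ⟶ N) {i j : s} (h : i.1 < j.1) :
    kerD f h ≫ (F h).map (kernel.ι (f.f i)) = kernel.ι (f.f j) ≫ M.d h := by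
  simp [kerD]

lemma kerD_ι_assoc {M N : Comod F δ s} (f : M ⟶ N) {i j : s} (h : i.1 < j.1) {Z : A j.1}
    (g : (F h).obj (M.X i) ⟶ Z) :
    kerD f h ≫ (F h).map (kernel.ι (f.f i)) ≫ g = kernel.ι (f.f j) ≫ M.d h ≫ g := by
  rw [← Category.assoc, kerD_ι, Category.assoc]

/-- The kernel comodule. -/
noncomputable abbrev ker {M N : Comod F δ s} (f : M ⟶ N) : Comod F δ s where
  X i := kernel (f.f i)
  d h := kerD f h
  compat {i k j} h₁ h₂ := by
    rw [← cancel_mono ((F h₂).map ((F h₁).map (kernel.ι (f.f i))))]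
    have h1 := (δ h₁ h₂).naturality (kernel.ι (f.f i))
    simp only [Functor.comp_map] at h1
    rw [Category.assoc, Category.assoc, ← h1, ← Functor.map_comp, kerD_ι, kerD_ι_assoc,
      Functor.map_comp, kerD_ι_assoc, M.compat]

lemma mono_f {M N : Comod F δ s} (f : M ⟶ N) [hf : Mono f] (i : s) : Mono (f.f i) := by
  let ι : ker f ⟶ M := ⟨fun i => kernel.ι (f.f i), fun h => (kerD_ι f h).symm⟩
  have : ι = zeroHom _ _ := by
    rw [← cancel_mono f]
    apply hext
    intro i
    exact (kernel.condition (f.f i)).trans zero_comp.symm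
  exact Preadditive.mono_of_kernel_zero (congr_f this i)

end ker

end Comod

section cofree

namespace Comod

/-- Coassociativity. -/
def Coassoc (F : ∀ ⦃i j : Fin n⦄, i < j → (A i ⥤ A j))
    (δ : ∀ ⦃i k j : Fin n⦄ (h₁ : i < k) (h₂ : k < j), F (h₁.trans h₂) ⟶ F h₁ ⋙ F h₂) : Prop :=
  ∀ ⦃i k l j : Fin n⦄ (h₁ : i < k) (h₂ : k < l) (h₃ : l < j) (X : A i),
      (δ h₁ (h₂.trans h₃)).app X ≫ (δ h₂ h₃).app ((F h₁).obj X) =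
        (δ (h₁.trans h₂) h₃).app X ≫ (F h₃).map ((δ h₁ h₂).app X)

/-- naturality of `δ`. -/
lemma δ_nat (δ : ∀ ⦃i k j : Fin n⦄ (h₁ : i < k) (h₂ : k < j), F (h₁.trans h₂) ⟶ F h₁ ⋙ F h₂)
    {i k j : Fin n} (h₁ : i < k) (h₂ : k < j) {X Y : A i} (f : X ⟶ Y) :
    (F (h₁.trans h₂)).map f ≫ (δ h₁ h₂).app Y =
      (δ h₁ h₂).app X ≫ (F h₂).map ((F h₁).map f) :=
  (δ h₁ h₂).naturality f

/-- The underlying object of the cofree comodule. -/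
noncomputable def GX (F : ∀ ⦃i j : Fin n⦄, i < j → (A i ⥤ A j))
    (Y : ∀ i : s, A i.1) (k : s) : A k.1 :=
  Y k ⊞ (⨁ fun i : {i : s // i.1 < k.1} => (F i.2).obj (Y i.1))

/-- First projection. -/
noncomputable def gp (Y : ∀ i : s, A i.1) (k : s) : GX F Y k ⟶ Y k := biprod.fst

/-- Other projections. -/
noncomputable def gq (Y : ∀ i : s, A i.1) {i k : s} (h : i.1 < k.1) :
    GX F Y k ⟶ (F h).obj (Y i) :=
  biprod.snd ≫ biproduct.π (fun i : {i : s // i.1 < k.1} => (F i.2).obj (Y i.1)) ⟨i, h⟩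

/-- Map into the cofree object. -/
noncomputable def glift (Y : ∀ i : s, A i.1) {k : s} {Z : A k.1} (a : Z ⟶ Y k)
    (b : ∀ i : s, ∀ h : i.1 < k.1, Z ⟶ (F h).obj (Y i)) : Z ⟶ GX F Y k :=
  biprod.lift a (biproduct.lift fun i => b i.1 i.2)

/-- First inclusion. -/
noncomputable def gi (Y : ∀ i : s, A i.1) (k : s) : Y k ⟶ GX F Y k := biprod.inl

/-- Other inclusions. -/
noncomputable def gj (Y : ∀ i : s, A i.1) {k : s} (i : {i : s // i.1 < k.1}) :
    (F i.2).obj (Y i.1) ⟶ GX F Y k :=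
  biproduct.ι (fun i : {i : s // i.1 < k.1} => (F i.2).obj (Y i.1)) i ≫ biprod.inr

@[simp] lemma glift_gp (Y : ∀ i : s, A i.1) {k : s} {Z : A k.1} (a : Z ⟶ Y k)
    (b : ∀ i : s, ∀ h : i.1 < k.1, Z ⟶ (F h).obj (Y i)) : glift Y a b ≫ gp Y k = a :=
  biprod.lift_fst _ _

@[simp] lemma glift_gq (Y : ∀ i : s, A i.1) {k : s} {Z : A k.1} (a : Z ⟶ Y k)
    (b : ∀ i : s, ∀ h : i.1 < k.1, Z ⟶ (F h).obj (Y i)) {i : s} (h : i.1 < k.1) :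
    glift Y a b ≫ gq Y h = b i h :=
  (biprod.lift_snd_assoc _ _ _).trans (biproduct.lift_π _ _)

@[simp] lemma gi_gp (Y : ∀ i : s, A i.1) (k : s) : gi (F := F) Y k ≫ gp Y k = 𝟙 _ :=
  biprod.inl_fst

@[simp] lemma gi_gq (Y : ∀ i : s, A i.1) {i k : s} (h : i.1 < k.1) :
    gi (F := F) Y k ≫ gq Y h = 0 :=
  (BinaryBicone.inl_snd_assoc _ _).trans zero_comp

@[simp] lemma gj_gp (Y : ∀ i : s, A i.1) {k : s} (i : {i : s // i.1 < k.1}) :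
    gj (F := F) Y i ≫ gp Y k = 0 :=
  (Category.assoc _ _ _).trans ((congrArg (_ ≫ ·) biprod.inr_fst).trans comp_zero)

lemma gj_gq (Y : ∀ i : s, A i.1) {k : s} (i i' : {i : s // i.1 < k.1}) :
    gj (F := F) Y i ≫ gq Y i'.2 =
      biproduct.ι (fun i : {i : s // i.1 < k.1} => (F i.2).obj (Y i.1)) i ≫
      biproduct.π (fun i : {i : s // i.1 < k.1} => (F i.2).obj (Y i.1)) i' :=
  (Category.assoc _ _ _).trans (congrArg (_ ≫ ·) (BinaryBicone.inr_snd_assoc _ _))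

@[simp] lemma gj_gq_self (Y : ∀ i : s, A i.1) {i k : s} (h : i.1 < k.1) :
    gj (F := F) Y ⟨i, h⟩ ≫ gq Y h = 𝟙 _ :=
  (gj_gq Y ⟨i, h⟩ ⟨i, h⟩).trans (biproduct.ι_π_self _ _)

lemma gj_gq_ne (Y : ∀ i : s, A i.1) {i i' k : s} (h : i.1 < k.1) (h' : i'.1 < k.1)
    (hne : i ≠ i') : gj (F := F) Y ⟨i, h⟩ ≫ gq Y h' = 0 :=
  (gj_gq Y ⟨i, h⟩ ⟨i', h'⟩).trans (biproduct.ι_π_ne _ (by simpa using hne))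

lemma GX_total (Y : ∀ i : s, A i.1) (k : s)
    [Fintype {i : s // i.1 < k.1}] :
    gp Y k ≫ gi Y k + ∑ i : {i : s // i.1 < k.1}, gq Y i.2 ≫ gj Y i = 𝟙 (GX F Y k) := by
  have h := biprod.total (X := Y k)
    (Y := ⨁ fun i : {i : s // i.1 < k.1} => (F i.2).obj (Y i.1))
  refine Eq.trans ?_ h
  refine congrArg (fun z => gp Y k ≫ gi Y k + z) ?_
  have h2 : (biprod.inr : _ ⟶ (Y k ⊞ ⨁ fun i : {i : s // i.1 < k.1} => (F i.2).obj (Y i.1))) =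
      ∑ i : {i : s // i.1 < k.1}, biproduct.π _ i ≫ biproduct.ι _ i ≫ biprod.inr := by
    conv_lhs => rw [← Category.id_comp biprod.inr, ← biproduct.total, Preadditive.sum_comp]
    simp only [Category.assoc]
  rw [h2]
  refine Eq.trans ?_ (Preadditive.comp_sum _ _ _).symm
  exact Finset.sum_congr rfl fun i _ => Category.assoc _ _ _

lemma GX_ext {C : Type*} [Category C] [Preadditive C] (Y : ∀ i : s, A i.1) (k : s)
    (H : A k.1 ⥤ C) [H.Additive] {Z : C} {f g : Z ⟶ H.obj (GX F Y k)}
    (h₀ : f ≫ H.map (gp Y k) = g ≫ H.map (gp Y k))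
    (h₁ : ∀ i : s, ∀ h : i.1 < k.1, f ≫ H.map (gq Y h) = g ≫ H.map (gq Y h)) : f = g := by
  classical
  have := Fintype.ofFinite {i : s // i.1 < k.1}
  rw [← Category.comp_id f, ← Category.comp_id g, ← H.map_id, ← GX_total, H.map_add, H.map_sum,
    Preadditive.comp_add, Preadditive.comp_add, Preadditive.comp_sum, Preadditive.comp_sum]
  congr 1
  · rw [H.map_comp, ← Category.assoc, h₀, Category.assoc]
  · refine Finset.sum_congr rfl fun i _ => ?_
    rw [H.map_comp, ← Category.assoc, h₁, Category.assoc]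

lemma GX_ext' (Y : ∀ i : s, A i.1) (k : s) {Z : A k.1} {f g : Z ⟶ GX F Y k}
    (h₀ : f ≫ gp Y k = g ≫ gp Y k)
    (h₁ : ∀ i : s, ∀ h : i.1 < k.1, f ≫ gq Y h = g ≫ gq Y h) : f = g :=
  GX_ext Y k (𝟭 (A k.1)) h₀ h₁

lemma exists_Hlift {C : Type*} [Category C] [Preadditive C] (Y : ∀ i : s, A i.1) (k : s)
    (H : A k.1 ⥤ C) [H.Additive] {Z : C} (a : Z ⟶ H.obj (Y k))
    (b : ∀ i : s, ∀ h : i.1 < k.1, Z ⟶ H.obj ((F h).obj (Y i))) :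
    ∃ l : Z ⟶ H.obj (GX F Y k), l ≫ H.map (gp Y k) = a ∧
      ∀ i : s, ∀ h : i.1 < k.1, l ≫ H.map (gq Y h) = b i h := by
  classical
  have := Fintype.ofFinite {i : s // i.1 < k.1}
  refine ⟨a ≫ H.map (gi Y k) + ∑ i : {i : s // i.1 < k.1}, b i.1 i.2 ≫ H.map (gj Y i), ?_, ?_⟩
  · rw [Preadditive.add_comp, Preadditive.sum_comp, Finset.sum_eq_zero]
    · simp [← H.map_comp]
    · intro i _
      simp [← H.map_comp]
  · intro i h
    rw [Preadditive.add_comp, Preadditive.sum_comp, Finset.sum_eq_single ⟨i, h⟩]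
    · simp [← H.map_comp]
    · intro j _ hj
      simp [← H.map_comp, gj_gq_ne Y j.2 h (fun hh => hj (Subtype.ext hh))]
    · simp

variable [hadd : ∀ {i j : Fin n} (h : i < j), (F h).Additive]

/-- Structure maps of the cofree comodule. -/
noncomputable def Gd (δ : ∀ ⦃i k j : Fin n⦄ (h₁ : i < k) (h₂ : k < j), F (h₁.trans h₂) ⟶ F h₁ ⋙ F h₂)
    (Y : ∀ i : s, A i.1) {i j : s} (h : i.1 < j.1) :
    GX F Y j ⟶ (F h).obj (GX F Y i) :=
  (exists_Hlift Y i (F h) (gq Y h)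
    (fun l hl => gq Y (hl.trans h) ≫ (δ hl h).app (Y l))).choose

lemma Gd_gp (Y : ∀ i : s, A i.1) {i j : s} (h : i.1 < j.1) :
    Gd δ Y h ≫ (F h).map (gp Y i) = gq Y h :=
  (exists_Hlift Y i (F h) (gq Y h)
    (fun l hl => gq Y (hl.trans h) ≫ (δ hl h).app (Y l))).choose_spec.1

lemma Gd_gq (Y : ∀ i : s, A i.1) {l i j : s} (hl : l.1 < i.1) (h : i.1 < j.1) :
    Gd δ Y h ≫ (F h).map (gq Y hl) = gq Y (hl.trans h) ≫ (δ hl h).app (Y l) :=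
  (exists_Hlift Y i (F h) (gq Y h)
    (fun l hl => gq Y (hl.trans h) ≫ (δ hl h).app (Y l))).choose_spec.2 l hl

/-- The cofree comodule. -/
noncomputable abbrev G (hδ : Coassoc F δ) (Y : ∀ i : s, A i.1) : Comod F δ s where
  X i := GX F Y i
  d h := Gd δ Y h
  compat {i k j} h₁ h₂ := by
    apply GX_ext Y i (F h₁ ⋙ F h₂)
    · simp only [Functor.comp_map, Category.assoc]
      rw [← Functor.map_comp, Gd_gp, Gd_gq, ← δ_nat, ← Category.assoc, Gd_gp]
    · intro l hl
      simp only [Functor.comp_map, Category.assoc]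
      rw [← Functor.map_comp, Gd_gq, ← δ_nat, ← Category.assoc _ _ ((δ h₁ h₂).app _), Gd_gq,
        Category.assoc, hδ, Functor.map_comp, ← Category.assoc, Gd_gq, Category.assoc]

section toG

variable (hδ : Coassoc F δ)

/-- Universal map to a restriction of a cofree comodule. -/
noncomputable def toG (hsu : ∀ ⦃i⦄, i ∈ s → i ∈ u) (hd : ∀ i j : u, i.1 < j.1 → j.1 ∈ s → i.1 ∈ s)
    (Y : ∀ i : u, A i.1) (N : Comod F δ s)
    (a : ∀ i : s, N.X i ⟶ Y ⟨i.1, hsu i.2⟩) : N ⟶ res hsu (G hδ Y) where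
  f k := glift (k := ⟨k.1, hsu k.2⟩) Y (a k) fun i h =>
    N.d (i := ⟨i.1, hd i ⟨k.1, hsu k.2⟩ h k.2⟩) (j := k) h ≫ (F h).map (a ⟨i.1, hd i ⟨k.1, hsu k.2⟩ h k.2⟩)
  comm {i j} h := by
    apply GX_ext Y ⟨i.1, hsu i.2⟩ (F h)
    · rw [Category.assoc, Category.assoc, ← Functor.map_comp]
      erw [glift_gp (k := ⟨i.1, hsu i.2⟩)]
      refine (congrArg (_ ≫ ·) (Gd_gp (δ := δ) Y (i := ⟨i.1, hsu i.2⟩)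
        (j := ⟨j.1, hsu j.2⟩) h)).trans ?_
      exact glift_gq (k := ⟨j.1, hsu j.2⟩) Y _ _ (i := ⟨i.1, hsu i.2⟩) h
    · intro l hl
      rw [Category.assoc, Category.assoc, ← Functor.map_comp]
      erw [glift_gq (k := ⟨i.1, hsu i.2⟩)]
      refine (congrArg (_ ≫ ·) (Gd_gq (δ := δ) Y (l := l) (i := ⟨i.1, hsu i.2⟩)
        (j := ⟨j.1, hsu j.2⟩) hl h)).trans ?_
      rw [← Category.assoc]
      erw [glift_gq (k := ⟨j.1, hsu j.2⟩) Y _ _ (i := l) (hl.trans h)]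
      rw [Category.assoc, δ_nat, Functor.map_comp, ← Category.assoc, ← Category.assoc]
      congr 1
      exact (N.compat (i := ⟨l.1, hd l ⟨i.1, hsu i.2⟩ hl i.2⟩) (k := i) (j := j) hl h).symm

@[simp] lemma toG_gp (hsu : ∀ ⦃i⦄, i ∈ s → i ∈ u) (hd : ∀ i j : u, i.1 < j.1 → j.1 ∈ s → i.1 ∈ s)
    (Y : ∀ i : u, A i.1) (N : Comod F δ s)
    (a : ∀ i : s, N.X i ⟶ Y ⟨i.1, hsu i.2⟩) (i : s) :
    (toG hδ hsu hd Y N a).f i ≫ gp Y ⟨i.1, hsu i.2⟩ = a i :=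
  glift_gp (k := ⟨i.1, hsu i.2⟩) Y (a i) fun l h =>
    N.d (i := ⟨l.1, hd l ⟨i.1, hsu i.2⟩ h i.2⟩) (j := i) h ≫
      (F h).map (a ⟨l.1, hd l ⟨i.1, hsu i.2⟩ h i.2⟩)

lemma toG_ext (hsu : ∀ ⦃i⦄, i ∈ s → i ∈ u) (hd : ∀ i j : u, i.1 < j.1 → j.1 ∈ s → i.1 ∈ s)
    (Y : ∀ i : u, A i.1) (N : Comod F δ s) (f g : N ⟶ res hsu (G hδ Y))
    (h : ∀ i : s, f.f i ≫ gp Y ⟨i.1, hsu i.2⟩ = g.f i ≫ gp Y ⟨i.1, hsu i.2⟩) : f = g := by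
  have key : ∀ (f : N ⟶ res hsu (G hδ Y)) (k : s) (i : u) (hi : i.1 < k.1),
      f.f k ≫ gq (k := ⟨k.1, hsu k.2⟩) Y hi =
        N.d (i := ⟨i.1, hd i ⟨k.1, hsu k.2⟩ hi k.2⟩) hi ≫ (F hi).map
          (f.f ⟨i.1, hd i ⟨k.1, hsu k.2⟩ hi k.2⟩ ≫ gp Y i) := by
    intro f k i hi
    have := f.comm (i := ⟨i.1, hd i ⟨k.1, hsu k.2⟩ hi k.2⟩) (j := k) hi
    rw [Functor.map_comp, ← Category.assoc, ← this, Category.assoc]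
    congr 1
    exact (Gd_gp (δ := δ) Y (i := i) (j := ⟨k.1, hsu k.2⟩) hi).symm
  apply hext
  intro k
  apply GX_ext' Y ⟨k.1, hsu k.2⟩ (h k)
  intro i hi
  refine (key f k i hi).trans (Eq.trans ?_ (key g k i hi).symm)
  congr 2
  exact h ⟨i.1, hd i ⟨k.1, hsu k.2⟩ hi k.2⟩

variable [hlex : ∀ {i j : Fin n} (h : i < j), PreservesFiniteLimits (F h)]

lemma injective_res_G (hsu : ∀ ⦃i⦄, i ∈ s → i ∈ u) (hd : ∀ i j : u, i.1 < j.1 → j.1 ∈ s → i.1 ∈ s)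
    (Y : ∀ i : u, A i.1) (hY : ∀ i, Injective (Y i)) : Injective (res hsu (G hδ Y)) := by
  refine ⟨fun {M N} g f hf => ?_⟩
  have := fun i => mono_f f i
  refine ⟨toG hδ hsu hd Y N fun i =>
    Injective.factorThru (g.f i ≫ gp Y ⟨i.1, hsu i.2⟩) (f.f i), ?_⟩
  apply toG_ext hδ hsu hd
  intro i
  rw [comp_f, Category.assoc, toG_gp, Injective.comp_factorThru]

lemma injective_G (Y : ∀ i : u, A i.1) (hY : ∀ i, Injective (Y i)) : Injective (G hδ Y) :=
  injective_res_G hδ (s := u) (u := u) (fun _ h => h) (fun i _ _ _ => i.2) Y hY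

lemma exists_retract (E : Comod F δ s) (hE : Injective E) :
    ∃ (Y : ∀ i : s, A i.1) (_ : ∀ i, Injective (Y i)) (a : E ⟶ G hδ Y) (r : G hδ Y ⟶ E),
      a ≫ r = 𝟙 E := by
  let Y : ∀ i : s, A i.1 := fun i => Injective.under (E.X i)
  let a : E ⟶ G hδ Y := toG hδ (s := s) (u := s) (fun _ h => h) (fun i _ _ _ => i.2) Y E
    fun i => Injective.ι (E.X i)
  have ha : Mono a := mono_of _ fun i => by
    have h : a.f i ≫ gp Y i = Injective.ι (E.X i) :=
      toG_gp hδ (s := s) (u := s) (fun _ h => h) (fun i _ _ _ => i.2) Y E _ i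
    have : Mono (a.f i ≫ gp Y i) := by rw [h]; infer_instance
    exact mono_of_mono (a.f i) (gp Y i)
  exact ⟨Y, fun i => inferInstance, a, Injective.factorThru (𝟙 E) a,
    Injective.comp_factorThru _ _⟩

lemma injective_res (hδ : Coassoc F δ) (hsu : ∀ ⦃i⦄, i ∈ s → i ∈ u) (hd : ∀ i j : u, i.1 < j.1 → j.1 ∈ s → i.1 ∈ s)
    (E : Comod F δ u) (hE : Injective E) : Injective (res hsu E) := by
  obtain ⟨Y, hY, a, r, har⟩ := exists_retract hδ E hE
  refine inj_of_retract (resMap hsu a) (resMap hsu r) ?_ (injective_res_G hδ hsu hd Y hY)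
  apply hext
  intro i
  exact congr_f har _

lemma epi_f (hδ : Coassoc F δ) {M N : Comod F δ s} (f : M ⟶ N) [hf : Epi f] (i : s) :
    Epi (f.f i) := by
  let Y : ∀ i : s, A i.1 := fun i => cokernel (f.f i)
  let t := fun (N : Comod F δ s) a => toG hδ (s := s) (u := s) (fun _ h => h)
    (fun i _ _ _ => i.2) Y N a
  have : t N (fun i => cokernel.π (f.f i)) = t N (fun i => 0) := by
    rw [← cancel_epi f]
    apply toG_ext hδ (s := s) (u := s) (fun _ h => h) (fun i _ _ _ => i.2)
    intro i
    rw [comp_f, comp_f, Category.assoc, Category.assoc]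
    have h1 : (t N (fun i => cokernel.π (f.f i))).f i ≫ gp Y i = cokernel.π (f.f i) :=
      toG_gp hδ (s := s) (u := s) _ _ Y N _ i
    have h2 : (t N (fun i => 0)).f i ≫ gp Y i = 0 :=
      toG_gp hδ (s := s) (u := s) (fun _ h => h) (fun i _ _ _ => i.2) Y N (fun i => 0) i
    refine (congrArg (f.f i ≫ ·) h1).trans (Eq.trans ?_ (congrArg (f.f i ≫ ·) h2).symm)
    simp
  have h2 := toG_gp hδ (s := s) (u := s) (fun _ h => h) (fun i _ _ _ => i.2) Y N
    (fun i => cokernel.π (f.f i)) i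
  have h3 := toG_gp hδ (s := s) (u := s) (fun _ h => h) (fun i _ _ _ => i.2) Y N
    (fun i => 0) i
  apply Preadditive.epi_of_cokernel_zero
  rw [← h2, ← h3]
  exact congrArg (fun z => z ≫ gp Y i) (congr_f this i)

lemma injective_GX (hF : ∀ ⦃i j : Fin n⦄ (h : i < j), i ∈ s → ∀ (E : A i),
      Injective E → Injective ((F h).obj E)) (Y : ∀ i : s, A i.1) (hY : ∀ i, Injective (Y i))
    (k : s) : Injective (GX F Y k) := by
  refine ⟨fun {M N} g f hf => ?_⟩
  have h := hY k
  have h' : ∀ i : s, ∀ h : i.1 < k.1, Injective ((F h).obj (Y i)) := fun i h =>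
    hF h i.2 _ (hY i)
  refine ⟨glift Y (Injective.factorThru (g ≫ gp Y k) f)
    (fun i h => (h' i h).factors (g ≫ gq Y h) f |>.choose), ?_⟩
  apply GX_ext'
  · simp
  · intro i h
    rw [Category.assoc, glift_gq]
    exact (h' i h).factors (g ≫ gq Y h) f |>.choose_spec

end toG

end Comod

end cofree

section backward

namespace Comod

/-- `O`, with the projections `π`, is the equalizer object `T(X)_j`. -/
structure IsT (X : Comod F δ s) (j : Fin n) (hs : ∀ i : s, i.1 < j) (O : A j)
    (π : ∀ i : s, O ⟶ (F (hs i)).obj (X.X i)) : Prop where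
  w : ∀ {i k : s} (h : i.1 < k.1),
    π k ≫ (F (hs k)).map (X.d h) = π i ≫ (δ h (hs k)).app (X.X i)
  ext : ∀ {Z : A j} {f g : Z ⟶ O}, (∀ i, f ≫ π i = g ≫ π i) → f = g
  lift : ∀ {Z : A j} (a : ∀ i : s, Z ⟶ (F (hs i)).obj (X.X i)),
    (∀ {i k : s} (h : i.1 < k.1),
      a k ≫ (F (hs k)).map (X.d h) = a i ≫ (δ h (hs k)).app (X.X i)) →
    ∃ l : Z ⟶ O, ∀ i, l ≫ π i = a i

section
variable {κ : Fin n} {hs : ∀ i : s, i.1 < κ}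

lemma IsT.map {X Y : Comod F δ s} {O O' : A κ}
    {π : ∀ i : s, O ⟶ (F (hs i)).obj (X.X i)} {π' : ∀ i : s, O' ⟶ (F (hs i)).obj (Y.X i)}
    (hO : IsT X κ hs O π) (hO' : IsT Y κ hs O' π') (f : X ⟶ Y) :
    ∃ l : O ⟶ O', ∀ i, l ≫ π' i = π i ≫ (F (hs i)).map (f.f i) := by
  apply hO'.lift
  intro i k h
  rw [Category.assoc, ← Functor.map_comp, f.comm, Functor.map_comp, ← Category.assoc, hO.w h,
    Category.assoc, Category.assoc, δ_nat]

variable [hadd : ∀ {i j : Fin n} (h : i < j), (F h).Additive]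
variable [hlex : ∀ {i j : Fin n} (h : i < j), PreservesFiniteLimits (F h)]

lemma IsT.sec_G (hδ : Coassoc F δ) (hsu : ∀ ⦃i⦄, i ∈ s → i ∈ u) (hκ : κ ∈ u)
    (hu : ∀ i, i ∈ u → i ∈ s ∨ i = κ) (Y : ∀ i : u, A i.1) {O : A κ}
    {π : ∀ i : s, O ⟶ (F (hs i)).obj ((res hsu (G hδ Y)).X i)}
    (hO : IsT (res hsu (G hδ Y)) κ hs O π) :
    ∃ σ : O ⟶ GX F Y ⟨κ, hκ⟩, ∀ i : s,
      σ ≫ Gd δ Y (i := ⟨i.1, hsu i.2⟩) (j := ⟨κ, hκ⟩) (hs i) = π i := by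
  have hmem : ∀ i : u, i.1 < κ → i.1 ∈ s := fun i hi => (hu i.1 i.2).resolve_right hi.ne
  let σ : O ⟶ GX F Y ⟨κ, hκ⟩ := glift (k := ⟨κ, hκ⟩) Y 0 fun i h =>
    π ⟨i.1, hmem i h⟩ ≫ (F h).map (gp Y i)
  have hσ : ∀ (i : u) (h : i.1 < κ), σ ≫ gq (k := ⟨κ, hκ⟩) Y h =
      π ⟨i.1, hmem i h⟩ ≫ (F h).map (gp Y i) := fun i h =>
    glift_gq (k := ⟨κ, hκ⟩) Y _ _ h
  refine ⟨σ, fun i => ?_⟩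
  apply GX_ext Y ⟨i.1, hsu i.2⟩ (F (hs i))
  · rw [Category.assoc, Gd_gp]
    exact hσ ⟨i.1, hsu i.2⟩ (hs i)
  · intro l hl
    rw [Category.assoc, Gd_gq, ← Category.assoc]
    refine (congrArg (· ≫ _) (hσ l (hl.trans (hs i)))).trans ?_
    rw [Category.assoc]
    refine (congrArg (_ ≫ ·) (δ_nat δ hl (hs i) (gp Y l))).trans ?_
    rw [← Category.assoc]
    refine (congrArg (· ≫ _) (hO.w (i := ⟨l.1, hmem l (hl.trans (hs i))⟩) (k := i) hl).symm).trans ?_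
    rw [Category.assoc, ← Functor.map_comp]
    congr 2
    exact Gd_gp (δ := δ) Y (i := l) (j := ⟨i.1, hsu i.2⟩) hl

lemma sec_E (hδ : Coassoc F δ) (hsu : ∀ ⦃i⦄, i ∈ s → i ∈ u) (hκ : κ ∈ u)
    (hu : ∀ i, i ∈ u → i ∈ s ∨ i = κ)
    (O : Comod F δ s → A κ) (π : ∀ (X : Comod F δ s) (i : s), O X ⟶ (F (hs i)).obj (X.X i))
    (hO : ∀ X, IsT X κ hs (O X) (π X)) (E : Comod F δ u) (hE : Injective E) :
    ∃ σ : O (res hsu E) ⟶ E.X ⟨κ, hκ⟩, ∀ i : s,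
      σ ≫ E.d (i := ⟨i.1, hsu i.2⟩) (j := ⟨κ, hκ⟩) (hs i) = π _ i := by
  obtain ⟨Y, hY, a, r, har⟩ := exists_retract hδ E hE
  obtain ⟨l, hl⟩ := (hO (res hsu E)).map (hO (res hsu (G hδ Y))) (resMap hsu a)
  obtain ⟨σ, hσ⟩ := (hO (res hsu (G hδ Y))).sec_G hδ hsu hκ hu Y
  refine ⟨l ≫ σ ≫ r.f ⟨κ, hκ⟩, fun i => ?_⟩
  have h1 := r.comm (i := ⟨i.1, hsu i.2⟩) (j := ⟨κ, hκ⟩) (hs i)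
  simp only [Category.assoc] at h1 ⊢
  rw [h1]
  have h2 := hσ i
  rw [← Category.assoc σ]
  refine (congrArg (fun z => l ≫ z ≫ _) h2).trans ?_
  rw [← Category.assoc, hl, Category.assoc, ← Functor.map_comp]
  have h3 := congr_f har ⟨i.1, hsu i.2⟩
  refine (congrArg (fun z => π _ i ≫ (F (hs i)).map z) h3).trans ?_
  rw [id_f]
  exact (congrArg (_ ≫ ·) ((F (hs i)).map_id _)).trans (Category.comp_id _)

lemma step (hδ : Coassoc F δ) (hsu : ∀ ⦃i⦄, i ∈ s → i ∈ u) (hκ : κ ∈ u)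
    (hu : ∀ i, i ∈ u → i ∈ s ∨ i = κ)
    (O : Comod F δ s → A κ) (π : ∀ (X : Comod F δ s) (i : s), O X ⟶ (F (hs i)).obj (X.X i))
    (hO : ∀ X, IsT X κ hs (O X) (π X))
    (hF : ∀ ⦃i j : Fin n⦄ (h : i < j) (E : A i), Injective E → Injective ((F h).obj E))
    (hsplit : ∀ (E E' : Comod F δ s) (p : E ⟶ E') (l : O E ⟶ O E'), Epi p → Injective E →
      Injective E' → (∀ i, l ≫ π E' i = π E i ≫ (F (hs i)).map (p.f i)) → IsSplitEpi l)
    (hA : Hereditary (A κ)) (hC : Hereditary (Comod F δ s)) : Hereditary (Comod F δ u) := by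
  intro E X p hp hE
  have hd : ∀ i j : u, i.1 < j.1 → j.1 ∈ s → i.1 ∈ s := by
    intro i j hij hj
    rcases hu i.1 i.2 with h | h
    · exact h
    · exact absurd (hs ⟨j.1, hj⟩) (by rw [← h]; exact hij.asymm)
  let K : u := ⟨κ, hκ⟩
  have hEs : Injective (res hsu E) := injective_res hδ hsu hd E hE
  have hpe := fun i => epi_f hδ p i
  have hps : Epi (resMap hsu p) := epi_of _ fun i => hpe _
  have hXs : Injective (res hsu X) := hC (resMap hsu p) hps hEs
  -- `E_K` and `X_K` are injective
  have hEK : Injective (E.X K) := by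
    obtain ⟨Y, hY, a, r, har⟩ := exists_retract hδ E hE
    exact inj_of_retract (a.f K) (r.f K) (congr_f har K)
      (injective_GX (fun i j h _ => hF h) Y hY K)
  have hXK : Injective (X.X K) := hA (p.f K) (hpe K) hEK
  -- section of the structure map of `X`
  obtain ⟨σE, hσE⟩ := sec_E hδ hsu hκ hu O π hO E hE
  obtain ⟨l, hl⟩ := (hO (res hsu E)).map (hO (res hsu X)) (resMap hsu p)
  obtain ⟨⟨τ, hτ⟩⟩ := (hsplit _ _ (resMap hsu p) l hps hEs hXs hl).exists_splitEpi
  have dX : ∀ N : Comod F δ u, ∃ c : N.X K ⟶ O (res hsu N), ∀ i : s, c ≫ π _ i =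
      N.d (i := ⟨i.1, hsu i.2⟩) (j := K) (hs i) := by
    intro N
    apply (hO (res hsu N)).lift
    intro i k h
    exact N.compat (i := ⟨i.1, hsu i.2⟩) (k := ⟨k.1, hsu k.2⟩) (j := K) h (hs k)
  obtain ⟨d, hdX⟩ := dX X
  let σ : O (res hsu X) ⟶ X.X K := τ ≫ σE ≫ p.f K
  have hσ : σ ≫ d = 𝟙 _ := by
    apply (hO _).ext
    intro i
    rw [Category.assoc, hdX]
    have h1 := p.comm (i := ⟨i.1, hsu i.2⟩) (j := K) (hs i)
    simp only [σ, Category.assoc]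
    rw [h1, ← Category.assoc σE]
    refine (congrArg (fun z => τ ≫ z ≫ _) (hσE i)).trans ?_
    refine (congrArg (fun z => τ ≫ z) (hl i).symm).trans ?_
    rw [← Category.assoc, hτ]
  -- injectivity
  refine ⟨fun {M N} f ι hι => ?_⟩
  have hιm := fun i => mono_f ι i
  have hιs : Mono (resMap hsu ι) := mono_of _ fun i => hιm _
  let g : res hsu N ⟶ res hsu X := Injective.factorThru (resMap hsu f) (resMap hsu ι)
  have hg : resMap hsu ι ≫ g = resMap hsu f := Injective.comp_factorThru _ _
  obtain ⟨dN, hdN⟩ := dX N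
  obtain ⟨Og, hOg⟩ := (hO (res hsu N)).map (hO (res hsu X)) g
  let h : N.X K ⟶ X.X K := Injective.factorThru (f.f K - f.f K ≫ d ≫ σ) (ι.f K)
  have hh : ι.f K ≫ h = f.f K - f.f K ≫ d ≫ σ := Injective.comp_factorThru _ _
  let gK : N.X K ⟶ X.X K := dN ≫ Og ≫ σ + h - h ≫ d ≫ σ
  have hgK1 : gK ≫ d = dN ≫ Og := by
    simp only [gK, Preadditive.sub_comp, Preadditive.add_comp, Category.assoc, hσ,
      Category.comp_id]
    abel
  have hgK2 : ι.f K ≫ gK = f.f K := by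
    have h1 : ι.f K ≫ dN ≫ Og = f.f K ≫ d := by
      apply (hO _).ext
      intro i
      have h2 := ι.comm (i := ⟨i.1, hsu i.2⟩) (j := K) (hs i)
      have h3 := f.comm (i := ⟨i.1, hsu i.2⟩) (j := K) (hs i)
      simp only [Category.assoc]
      rw [hOg, hdX]
      refine Eq.trans ?_ h3.symm
      rw [← Category.assoc dN, hdN, ← Category.assoc]
      refine (congrArg (· ≫ _) h2).trans ?_
      rw [Category.assoc, ← Functor.map_comp]
      congr 2
      exact congr_f hg i
    have h4 : ι.f K ≫ dN ≫ Og ≫ σ = f.f K ≫ d ≫ σ := by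
      have := congrArg (· ≫ σ) h1
      simpa only [Category.assoc] using this
    have h5 : ι.f K ≫ h ≫ d ≫ σ = 0 := by
      rw [← Category.assoc, hh]
      simp only [Preadditive.sub_comp, Category.assoc]
      rw [← Category.assoc σ, hσ, Category.id_comp, sub_self]
    simp only [gK, Preadditive.comp_sub, Preadditive.comp_add]
    rw [h4, h5, hh]
    abel
  have hgK3 : ∀ i : s, gK ≫ X.d (i := ⟨i.1, hsu i.2⟩) (j := K) (hs i) =
      N.d (i := ⟨i.1, hsu i.2⟩) (j := K) (hs i) ≫ (F (hs i)).map (g.f i) := by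
    intro i
    rw [← hdX, ← Category.assoc, hgK1, Category.assoc, hOg, ← hdN, Category.assoc]
  classical
  have hnot : ∀ i : u, i.1 ∉ s → i = K := fun i hi =>
    Subtype.ext ((hu i.1 i.2).resolve_left hi)
  have hKs : K.1 ∉ s := fun hk => lt_irrefl _ (hs ⟨_, hk⟩)
  let φ : ∀ i : u, N.X i ⟶ X.X i := fun i =>
    if hi : i.1 ∈ s then g.f ⟨i.1, hi⟩ else (hnot i hi).symm ▸ gK
  have hφs : ∀ (i : s), φ ⟨i.1, hsu i.2⟩ = g.f i := fun i => dif_pos i.2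
  have hφK : φ K = gK := dif_neg hKs
  refine ⟨⟨φ, fun {i j} hij => ?_⟩, ?_⟩
  · by_cases hj : j.1 ∈ s
    · have hi := hd i j hij hj
      refine (congrArg (· ≫ _) (hφs ⟨j.1, hj⟩)).trans (Eq.trans ?_
        (congrArg (fun z => _ ≫ (F hij).map z) (hφs ⟨i.1, hi⟩)).symm)
      exact g.comm (i := ⟨i.1, hi⟩) (j := ⟨j.1, hj⟩) hij
    · obtain rfl := hnot j hj
      have hi : i.1 ∈ s := (hu i.1 i.2).resolve_right hij.ne
      rw [hφK]
      refine (hgK3 ⟨i.1, hi⟩).trans ?_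
      exact (congrArg (fun z => _ ≫ (F hij).map z) (hφs ⟨i.1, hi⟩)).symm
  · apply hext
    intro i
    by_cases hi : i.1 ∈ s
    · exact (congrArg (_ ≫ ·) (hφs ⟨i.1, hi⟩)).trans (congr_f hg ⟨i.1, hi⟩)
    · obtain rfl := hnot i hi
      exact (congrArg (_ ≫ ·) hφK).trans hgK2

end

end Comod

end backward

section Tdata

namespace Comod

variable {m : ℕ}
variable [hadd : ∀ {i j : Fin n} (h : i < j), (F h).Additive]

/-- Projections of `VObj`. -/
noncomputable def vp (X : Comod F δ (lowSet n m)) (j : highSet n m) (i : lowSet n m) :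
    VObj F δ X j ⟶ (F (low_lt_high i j)).obj (X.X i) :=
  biproduct.π (fun i : lowSet n m => (F (low_lt_high i j)).obj (X.X i)) i

/-- Projections of `WObj`. -/
noncomputable def wp (X : Comod F δ (lowSet n m)) (j : highSet n m) (k : lowSet n m) :
    WObj F δ X j ⟶ (F (low_lt_high k j)).obj (GX F X.X k) :=
  biproduct.π (fun k : lowSet n m => (F (low_lt_high k j)).obj (Glow F δ X k)) k

/-- Inclusions of `VObj`. -/
noncomputable def vi (X : Comod F δ (lowSet n m)) (j : highSet n m) (i : lowSet n m) :
    (F (low_lt_high i j)).obj (X.X i) ⟶ VObj F δ X j :=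
  biproduct.ι (fun i : lowSet n m => (F (low_lt_high i j)).obj (X.X i)) i

lemma vi_vp_self (X : Comod F δ (lowSet n m)) (j : highSet n m) (i : lowSet n m) :
    vi X j i ≫ vp X j i = 𝟙 _ := biproduct.ι_π_self _ _

lemma vi_vp_ne (X : Comod F δ (lowSet n m)) (j : highSet n m) {i k : lowSet n m} (h : i ≠ k) :
    vi X j i ≫ vp X j k = 0 :=
  biproduct.ι_π_ne (fun i : lowSet n m => (F (low_lt_high i j)).obj (X.X i)) h

lemma v_ext (X : Comod F δ (lowSet n m)) (j : highSet n m) {Z : A j.1} {f g : VObj F δ X j ⟶ Z}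
    (h : ∀ i, vi X j i ≫ f = vi X j i ≫ g) : f = g :=
  biproduct.hom_ext' _ _ h

/-- The coaction. -/
noncomputable def coact' (X : Comod F δ (lowSet n m)) (k : lowSet n m) : X.X k ⟶ GX F X.X k :=
  coact F δ X k

/-- Components of `phi`. -/
noncomputable def phiC (X : Comod F δ (lowSet n m)) (j : highSet n m) (i k : lowSet n m) :
    (F (low_lt_high i j)).obj (X.X i) ⟶ (F (low_lt_high k j)).obj (GX F X.X k) :=
  if h : i.1 < k.1 then
      (δ h (low_lt_high k j)).app (X.X i) ≫
        (F (low_lt_high k j)).map (gj X.X ⟨i, h⟩)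
    else if he : i = k then
      eqToHom (by subst he; rfl) ≫ (F (low_lt_high k j)).map (gi X.X k)
    else 0

lemma phi_wp (X : Comod F δ (lowSet n m)) (j : highSet n m) (i k : lowSet n m) :
    vi X j i ≫ phi F δ X j ≫ wp X j k = phiC X j i k :=
  (congrArg (vi X j i ≫ ·) (biproduct.matrix_π _ _)).trans (biproduct.ι_desc _ _)

lemma psi_wp (X : Comod F δ (lowSet n m)) (j : highSet n m) (k : lowSet n m) :
    psi F δ X j ≫ wp X j k = vp X j k ≫ (F (low_lt_high k j)).map (coact' X k) := by
  apply v_ext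
  intro i
  refine ((congrArg (vi X j i ≫ ·) (biproduct.matrix_π _ _)).trans
    (biproduct.ι_desc _ _)).trans ?_
  rw [← Category.assoc]
  by_cases h : i = k
  · subst h
    rw [dif_pos rfl, vi_vp_self]
    simp only [eqToHom_refl]
    rfl
  · rw [dif_neg h, vi_vp_ne _ _ h, zero_comp]
    rfl

lemma phi_gp (X : Comod F δ (lowSet n m)) (j : highSet n m) (k : lowSet n m) :
    phi F δ X j ≫ wp X j k ≫ (F (low_lt_high k j)).map (gp X.X k) = vp X j k := by
  apply v_ext
  intro i
  rw [← Category.assoc (phi F δ X j), ← Category.assoc (vi X j i), phi_wp]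
  unfold phiC
  by_cases h : i.1 < k.1
  · rw [dif_pos h, Category.assoc, ← Functor.map_comp, gj_gp, Functor.map_zero, comp_zero,
      vi_vp_ne]
    rintro rfl
    exact lt_irrefl _ h
  · rw [dif_neg h]
    by_cases h' : i = k
    · subst h'
      rw [dif_pos rfl, vi_vp_self]
      simp only [eqToHom_refl, Category.id_comp]
      rw [← Functor.map_comp, gi_gp, CategoryTheory.Functor.map_id]
    · rw [dif_neg h', zero_comp, vi_vp_ne _ _ h']

lemma phi_gq (X : Comod F δ (lowSet n m)) (j : highSet n m) {l k : lowSet n m} (hl : l.1 < k.1) :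
    phi F δ X j ≫ wp X j k ≫ (F (low_lt_high k j)).map (gq X.X hl) =
      vp X j l ≫ (δ hl (low_lt_high k j)).app (X.X l) := by
  apply v_ext
  intro i
  rw [← Category.assoc (phi F δ X j), ← Category.assoc (vi X j i), phi_wp, ← Category.assoc]
  unfold phiC
  by_cases h' : i = l
  · subst h'
    rw [dif_pos hl, Category.assoc, ← Functor.map_comp, gj_gq_self, CategoryTheory.Functor.map_id, vi_vp_self,
      Category.id_comp]
    exact Category.comp_id _
  · rw [vi_vp_ne _ _ h', zero_comp]
    by_cases h : i.1 < k.1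
    · rw [dif_pos h, Category.assoc, ← Functor.map_comp, gj_gq_ne _ _ _ h', Functor.map_zero,
        comp_zero]
    · rw [dif_neg h]
      by_cases h' : i = k
      · subst h'
        rw [dif_pos rfl]
        simp only [eqToHom_refl, Category.id_comp]
        rw [← Functor.map_comp, gi_gq, Functor.map_zero]
      · rw [dif_neg h', zero_comp]

lemma psi_gp (X : Comod F δ (lowSet n m)) (j : highSet n m) (k : lowSet n m) :
    psi F δ X j ≫ wp X j k ≫ (F (low_lt_high k j)).map (gp X.X k) = vp X j k := by
  rw [← Category.assoc, psi_wp, Category.assoc]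
  have : coact' X k ≫ gp X.X k = 𝟙 _ := biprod.lift_fst _ _
  rw [← Functor.map_comp, this, CategoryTheory.Functor.map_id, Category.comp_id]

lemma psi_gq (X : Comod F δ (lowSet n m)) (j : highSet n m) {l k : lowSet n m} (hl : l.1 < k.1) :
    psi F δ X j ≫ wp X j k ≫ (F (low_lt_high k j)).map (gq X.X hl) =
      vp X j k ≫ (F (low_lt_high k j)).map (X.d hl) := by
  rw [← Category.assoc, psi_wp, Category.assoc]
  have : coact' X k ≫ gq X.X hl = X.d hl :=
    glift_gq X.X (𝟙 _) (fun i h => X.d h) hl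
  rw [← Functor.map_comp, this]

lemma isT_of {m : ℕ} (X : Comod F δ (lowSet n m)) (j : highSet n m) {O : A j.1}
    (e : O ⟶ VObj F δ X j) (hw : e ≫ phi F δ X j = e ≫ psi F δ X j)
    (hlim : Nonempty (IsLimit (Fork.ofι e hw))) :
    IsT X j.1 (fun i => low_lt_high i j) O (fun i => e ≫ vp X j i) := by
  obtain ⟨hl⟩ := hlim
  refine ⟨fun {i k} h => ?_, fun {Z f g} h => ?_, fun {Z} a ha => ?_⟩
  · rw [Category.assoc, Category.assoc, ← psi_gq, ← phi_gq, ← Category.assoc, ← hw,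
      Category.assoc]
  · refine Fork.IsLimit.hom_ext hl ?_
    apply biproduct.hom_ext
    intro i
    have := h i
    rw [← Category.assoc, ← Category.assoc] at this
    exact this
  · let b : Z ⟶ VObj F δ X j := biproduct.lift a
    have hb : ∀ i, b ≫ vp X j i = a i := fun i => biproduct.lift_π _ _
    have hbw : b ≫ phi F δ X j = b ≫ psi F δ X j := by
      apply biproduct.hom_ext
      intro k
      change (b ≫ phi F δ X j) ≫ wp X j k = (b ≫ psi F δ X j) ≫ wp X j k
      apply GX_ext X.X k (F (low_lt_high k j))
      · simp only [Category.assoc, phi_gp, psi_gp]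
      · intro i h
        simp only [Category.assoc, phi_gq, psi_gq]
        rw [← Category.assoc, ← Category.assoc, hb, hb, ha]
    refine ⟨Fork.IsLimit.lift hl b hbw, fun i => ?_⟩
    rw [← Category.assoc, ← hb i]
    congr 1
    exact Fork.IsLimit.lift_ι' hl b hbw

lemma Vmap_vp {X Y : Comod F δ (lowSet n m)} (f : X ⟶ Y) (j : highSet n m) (i : lowSet n m) :
    Vmap F δ f j ≫ vp Y j i = vp X j i ≫ (F (low_lt_high i j)).map (f.f i) := by
  unfold Vmap vp
  exact biproduct.map_π _ _

lemma lamV_vp (X : Comod F δ (lowSet n m)) (j k : highSet n m) (h : j.1 < k.1) (i : lowSet n m) :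
    lamV F δ X j k h ≫ (F h).map (vp X j i) =
      vp X k i ≫ (δ (low_lt_high i j) h).app (X.X i) := by
  apply v_ext
  intro l
  have h1 : vi X k l ≫ lamV F δ X j k h =
      (δ (low_lt_high l j) h).app (X.X l) ≫ (F h).map (vi X j l) := biproduct.ι_desc _ _
  rw [← Category.assoc, h1, Category.assoc, ← Functor.map_comp, ← Category.assoc]
  by_cases hl : l = i
  · subst hl
    rw [vi_vp_self, vi_vp_self, CategoryTheory.Functor.map_id, Category.id_comp]
    exact Category.comp_id _
  · rw [vi_vp_ne _ _ hl, vi_vp_ne _ _ hl, Functor.map_zero, zero_comp, comp_zero]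

end Comod

end Tdata

section glue

namespace Comod

section
variable (hsu : ∀ ⦃i⦄, i ∈ s → i ∈ u) (htu : ∀ ⦃i⦄, i ∈ t → i ∈ u)
  (hst : ∀ (i : s) (j : t), i.1 < j.1)

/-- A comodule over `u = s ∪ t` glued from comodules over `s` and `t`. -/
structure Glue (X1 : Comod F δ s) (X2 : Comod F δ t)
    (τ : ∀ (i : s) (j : t), X2.X j ⟶ (F (hst i j)).obj (X1.X i)) where
  W : Comod F δ u
  a : res hsu W ≅ X1
  b : res htu W ≅ X2
  comm : ∀ (i : s) (j : t), W.d (i := ⟨i.1, hsu i.2⟩) (j := ⟨j.1, htu j.2⟩) (hst i j) ≫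
    (F (hst i j)).map (a.hom.f i) = b.hom.f j ≫ τ i j

/-- Objects of the glued comodule. -/
def gX (hcov : ∀ i, i ∈ u → i ∈ s ∨ i ∈ t) (X1 : Comod F δ s) (X2 : Comod F δ t) (i : u)
    (p : Decidable (i.1 ∈ s)) : A i.1 :=
  match p with
  | .isTrue h => X1.X ⟨i.1, h⟩
  | .isFalse h => X2.X ⟨i.1, (hcov i.1 i.2).resolve_left h⟩

/-- Structure maps of the glued comodule. -/
def gd (hcov : ∀ i, i ∈ u → i ∈ s ∨ i ∈ t) (X1 : Comod F δ s) (X2 : Comod F δ t)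
    (τ : ∀ (i : s) (j : t), X2.X j ⟶ (F (hst i j)).obj (X1.X i)) {i j : u} (h : i.1 < j.1)
    (p : Decidable (i.1 ∈ s)) (q : Decidable (j.1 ∈ s)) :
    gX hcov X1 X2 j q ⟶ (F h).obj (gX hcov X1 X2 i p) :=
  match p, q with
  | .isTrue hi, .isTrue hj => X1.d (i := ⟨i.1, hi⟩) (j := ⟨j.1, hj⟩) h
  | .isTrue hi, .isFalse hj => τ ⟨i.1, hi⟩ ⟨j.1, (hcov j.1 j.2).resolve_left hj⟩
  | .isFalse hi, .isTrue hj =>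
    absurd (hst ⟨j.1, hj⟩ ⟨i.1, (hcov i.1 i.2).resolve_left hi⟩) h.asymm
  | .isFalse hi, .isFalse hj => X2.d (i := ⟨i.1, (hcov i.1 i.2).resolve_left hi⟩)
      (j := ⟨j.1, (hcov j.1 j.2).resolve_left hj⟩) h

lemma gd_compat (hcov : ∀ i, i ∈ u → i ∈ s ∨ i ∈ t) (X1 : Comod F δ s) (X2 : Comod F δ t)
    (τ : ∀ (i : s) (j : t), X2.X j ⟶ (F (hst i j)).obj (X1.X i))
    (c1 : ∀ {i k : s} (j : t) (h : i.1 < k.1),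
      τ k j ≫ (F (hst k j)).map (X1.d h) = τ i j ≫ (δ h (hst k j)).app (X1.X i))
    (c2 : ∀ (i : s) {k j : t} (h : k.1 < j.1),
      X2.d h ≫ (F h).map (τ i k) = τ i j ≫ (δ (hst i k) h).app (X1.X i))
    {i k j : u} (h₁ : i.1 < k.1) (h₂ : k.1 < j.1)
    (p : Decidable (i.1 ∈ s)) (q : Decidable (k.1 ∈ s)) (r : Decidable (j.1 ∈ s)) :
    gd hst hcov X1 X2 τ h₂ q r ≫ (F h₂).map (gd hst hcov X1 X2 τ h₁ p q) =
      gd hst hcov X1 X2 τ (h₁.trans h₂) p r ≫ (δ h₁ h₂).app (gX hcov X1 X2 i p) := by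
  have hno : ∀ {i j : u}, i.1 < j.1 → i.1 ∉ s → j.1 ∈ s → False := fun {i j} h hi hj =>
    absurd (hst ⟨j.1, hj⟩ ⟨i.1, (hcov i.1 i.2).resolve_left hi⟩) h.asymm
  cases p with
  | isTrue hi =>
    cases q with
    | isTrue hk =>
      cases r with
      | isTrue hj => exact X1.compat (i := ⟨i.1, hi⟩) (k := ⟨k.1, hk⟩) (j := ⟨j.1, hj⟩) h₁ h₂
      | isFalse hj => exact c1 (i := ⟨i.1, hi⟩) (k := ⟨k.1, hk⟩) _ h₁
    | isFalse hk =>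
      cases r with
      | isTrue hj => exact (hno h₂ hk hj).elim
      | isFalse hj => exact c2 ⟨i.1, hi⟩ (k := ⟨k.1, _⟩) (j := ⟨j.1, _⟩) h₂
  | isFalse hi =>
    cases q with
    | isTrue hk => exact (hno h₁ hi hk).elim
    | isFalse hk =>
      cases r with
      | isTrue hj => exact (hno h₂ hk hj).elim
      | isFalse hj => exact X2.compat (i := ⟨i.1, _⟩) (k := ⟨k.1, _⟩) (j := ⟨j.1, _⟩) h₁ h₂

lemma exists_glue (hcov : ∀ i, i ∈ u → i ∈ s ∨ i ∈ t) (X1 : Comod F δ s) (X2 : Comod F δ t)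
    (τ : ∀ (i : s) (j : t), X2.X j ⟶ (F (hst i j)).obj (X1.X i))
    (c1 : ∀ {i k : s} (j : t) (h : i.1 < k.1),
      τ k j ≫ (F (hst k j)).map (X1.d h) = τ i j ≫ (δ h (hst k j)).app (X1.X i))
    (c2 : ∀ (i : s) {k j : t} (h : k.1 < j.1),
      X2.d h ≫ (F h).map (τ i k) = τ i j ≫ (δ (hst i k) h).app (X1.X i)) :
    Nonempty (Glue hsu htu hst X1 X2 τ) := by
  classical
  have hts : ∀ j : t, j.1 ∉ s := fun j h => lt_irrefl _ (hst ⟨j.1, h⟩ j)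
  let D : ∀ i : u, Decidable (i.1 ∈ s) := fun i =>
    if h : i.1 ∈ s then .isTrue h else .isFalse h
  let W : Comod F δ u :=
    ⟨fun i => gX hcov X1 X2 i (D i), fun {i j} h => gd hst hcov X1 X2 τ h (D i) (D j),
      fun h₁ h₂ => gd_compat hst hcov X1 X2 τ c1 c2 h₁ h₂ _ _ _⟩
  have hD1 : ∀ i : s, D ⟨i.1, hsu i.2⟩ = .isTrue i.2 := fun i => dif_pos i.2
  have hD2 : ∀ i : t, D ⟨i.1, htu i.2⟩ = .isFalse (hts i) := fun i => dif_neg (hts i)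
  have e1 : ∀ i : s, gX hcov X1 X2 ⟨i.1, hsu i.2⟩ (D ⟨i.1, hsu i.2⟩) = X1.X i := fun i => by
    rw [hD1]; rfl
  have e2 : ∀ i : t, gX hcov X1 X2 ⟨i.1, htu i.2⟩ (D ⟨i.1, htu i.2⟩) = X2.X i := fun i => by
    rw [hD2]; rfl
  have d1 : ∀ {i j : s} (h : i.1 < j.1) p q (hp : p = .isTrue i.2) (hq : q = .isTrue j.2),
      eqToHom (by rw [hq]; rfl) ≫ X1.d h = gd (i := ⟨i.1, hsu i.2⟩) (j := ⟨j.1, hsu j.2⟩)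
        hst hcov X1 X2 τ h p q ≫ (F h).map (eqToHom (by rw [hp]; rfl)) := by
    rintro i j h _ _ rfl rfl
    simp [gd]
    exact (Category.id_comp _).trans ((Category.comp_id _).symm.trans
      (congrArg (_ ≫ ·) ((F h).map_id _).symm))
  have d2 : ∀ {i j : t} (h : i.1 < j.1) p q (hp : p = .isFalse (hts i)) (hq : q = .isFalse (hts j)),
      eqToHom (by rw [hq]; rfl) ≫ X2.d h = gd (i := ⟨i.1, htu i.2⟩) (j := ⟨j.1, htu j.2⟩)
        hst hcov X1 X2 τ h p q ≫ (F h).map (eqToHom (by rw [hp]; rfl)) := by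
    rintro i j h _ _ rfl rfl
    exact (Category.id_comp _).trans ((Category.comp_id _).symm.trans
      (congrArg (_ ≫ ·) ((F h).map_id _).symm))
  have d3 : ∀ (i : s) (j : t) p q (hp : p = .isTrue i.2) (hq : q = .isFalse (hts j)),
      eqToHom (by rw [hq]; rfl) ≫ τ i j = gd (i := ⟨i.1, hsu i.2⟩) (j := ⟨j.1, htu j.2⟩)
        hst hcov X1 X2 τ (hst i j) p q ≫ (F (hst i j)).map (eqToHom (by rw [hp]; rfl)) := by
    rintro i j _ _ rfl rfl
    exact (Category.id_comp _).trans ((Category.comp_id _).symm.trans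
      (congrArg (_ ≫ ·) ((F (hst i j)).map_id _).symm))
  have iso : ∀ {s : Set (Fin n)} {M N : Comod F δ s} (f : M ⟶ N) (hf : ∀ i, IsIso (f.f i)),
      IsIso f := by
    intro s M N f hf
    refine ⟨⟨fun i => inv (f.f i), fun {i j} h => ?_⟩, hext fun i => IsIso.hom_inv_id (f.f i),
      hext fun i => IsIso.inv_hom_id (f.f i)⟩
    rw [IsIso.inv_comp_eq, ← Category.assoc, f.comm, Category.assoc, ← Functor.map_comp,
      IsIso.hom_inv_id, CategoryTheory.Functor.map_id, Category.comp_id]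
  let a : res hsu W ⟶ X1 := ⟨fun i => eqToHom (e1 i), fun {i j} h => d1 h _ _ (hD1 i) (hD1 j)⟩
  let b : res htu W ⟶ X2 := ⟨fun i => eqToHom (e2 i), fun {i j} h => d2 h _ _ (hD2 i) (hD2 j)⟩
  have ha : IsIso a := iso a fun i => inferInstanceAs (IsIso (eqToHom (e1 i)))
  have hb : IsIso b := iso b fun i => inferInstanceAs (IsIso (eqToHom (e2 i)))
  exact ⟨⟨W, asIso a, asIso b, fun i j => (d3 i j _ _ (hD1 i) (hD2 j)).symm⟩⟩

variable {hsu htu hst}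

lemma assemble (hcov : ∀ i, i ∈ u → i ∈ s ∨ i ∈ t) {M N : Comod F δ u}
    (hst : ∀ (i : s) (j : t), i.1 < j.1)
    (f1 : res hsu M ⟶ res hsu N) (f2 : res htu M ⟶ res htu N)
    (hc : ∀ (i : s) (j : t), f2.f j ≫ N.d (i := ⟨i.1, hsu i.2⟩) (j := ⟨j.1, htu j.2⟩) (hst i j) =
      M.d (i := ⟨i.1, hsu i.2⟩) (j := ⟨j.1, htu j.2⟩) (hst i j) ≫ (F (hst i j)).map (f1.f i)) :
    ∃ f : M ⟶ N, resMap hsu f = f1 ∧ resMap htu f = f2 := by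
  classical
  have hts : ∀ j : t, j.1 ∉ s := fun j h => lt_irrefl _ (hst ⟨j.1, h⟩ j)
  let φ : ∀ i : u, M.X i ⟶ N.X i := fun i =>
    if h : i.1 ∈ s then f1.f ⟨i.1, h⟩ else f2.f ⟨i.1, (hcov i.1 i.2).resolve_left h⟩
  have h1 : ∀ i : s, φ ⟨i.1, hsu i.2⟩ = f1.f i := fun i => dif_pos i.2
  have h2 : ∀ i : t, φ ⟨i.1, htu i.2⟩ = f2.f i := fun i => dif_neg (hts i)
  refine ⟨⟨φ, fun {i j} hij => ?_⟩, hext h1, hext h2⟩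
  rcases hcov i.1 i.2 with hi | hi <;> rcases hcov j.1 j.2 with hj | hj
  · refine (congrArg (· ≫ _) (h1 ⟨j.1, hj⟩)).trans (Eq.trans ?_
        (congrArg (fun z => _ ≫ (F hij).map z) (h1 ⟨i.1, hi⟩)).symm)
    exact f1.comm (i := ⟨i.1, hi⟩) (j := ⟨j.1, hj⟩) hij
  · refine (congrArg (· ≫ _) (h2 ⟨j.1, hj⟩)).trans (Eq.trans ?_
        (congrArg (fun z => _ ≫ (F hij).map z) (h1 ⟨i.1, hi⟩)).symm)
    exact hc ⟨i.1, hi⟩ ⟨j.1, hj⟩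
  · exact absurd (hst ⟨j.1, hj⟩ ⟨i.1, hi⟩) hij.asymm
  · refine (congrArg (· ≫ _) (h2 ⟨j.1, hj⟩)).trans (Eq.trans ?_
        (congrArg (fun z => _ ≫ (F hij).map z) (h2 ⟨i.1, hi⟩)).symm)
    exact f2.comm (i := ⟨i.1, hi⟩) (j := ⟨j.1, hj⟩) hij

variable {X1 : Comod F δ s} {X2 : Comod F δ t}
    {τ : ∀ (i : s) (j : t), X2.X j ⟶ (F (hst i j)).obj (X1.X i)}

lemma Glue.into (hcov : ∀ i, i ∈ u → i ∈ s ∨ i ∈ t) (g : Glue hsu htu hst X1 X2 τ)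
    {N : Comod F δ u} (f1 : res hsu N ⟶ X1) (f2 : res htu N ⟶ X2)
    (hc : ∀ (i : s) (j : t), f2.f j ≫ τ i j =
      N.d (i := ⟨i.1, hsu i.2⟩) (j := ⟨j.1, htu j.2⟩) (hst i j) ≫ (F (hst i j)).map (f1.f i)) :
    ∃ f : N ⟶ g.W, resMap hsu f ≫ g.a.hom = f1 ∧ resMap htu f ≫ g.b.hom = f2 := by
  have ha : ∀ i, g.a.hom.f i ≫ g.a.inv.f i = 𝟙 _ := fun i => congr_f g.a.hom_inv_id i
  have hb : ∀ i, g.b.inv.f i ≫ g.b.hom.f i = 𝟙 _ := fun i => congr_f g.b.inv_hom_id i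
  obtain ⟨f, h1, h2⟩ := assemble hcov (M := N) (N := g.W) hst (f1 ≫ g.a.inv) (f2 ≫ g.b.inv) (by
    intro i j
    have h := g.comm i j
    have h' := congrArg (fun z => g.b.inv.f j ≫ z ≫ (F (hst i j)).map (g.a.inv.f i)) h
    simp only [Category.assoc] at h'
    rw [← Functor.map_comp, ha, CategoryTheory.Functor.map_id] at h'
    rw [comp_f, comp_f, Category.assoc, Functor.map_comp]
    refine Eq.trans ?_ ((congrArg (· ≫ _) (hc i j)).trans (Category.assoc _ _ _))
    refine (congrArg (_ ≫ ·) ((congrArg (_ ≫ ·) (Category.comp_id _).symm).trans h')).trans ?_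
    rw [← Category.assoc (g.b.inv.f j), hb, Category.id_comp, Category.assoc])
  exact ⟨f, by rw [h1, Category.assoc, Iso.inv_hom_id, Category.comp_id],
    by rw [h2, Category.assoc, Iso.inv_hom_id, Category.comp_id]⟩

lemma ext_cov (hcov : ∀ i, i ∈ u → i ∈ s ∨ i ∈ t) {M N : Comod F δ u} {f g : M ⟶ N}
    (h1 : resMap hsu f = resMap hsu g) (h2 : resMap htu f = resMap htu g) : f = g := by
  apply hext
  intro i
  rcases hcov i.1 i.2 with hi | hi
  · exact congr_f h1 ⟨i.1, hi⟩
  · exact congr_f h2 ⟨i.1, hi⟩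

lemma epi_cov (hcov : ∀ i, i ∈ u → i ∈ s ∨ i ∈ t) {M N : Comod F δ u} {f : M ⟶ N}
    (h1 : ∀ i, Epi ((resMap hsu f).f i)) (h2 : ∀ i, Epi ((resMap htu f).f i)) : Epi f := by
  apply epi_of
  intro i
  rcases hcov i.1 i.2 with hi | hi
  · exact h1 ⟨i.1, hi⟩
  · exact h2 ⟨i.1, hi⟩

lemma mono_cov (hcov : ∀ i, i ∈ u → i ∈ s ∨ i ∈ t) {M N : Comod F δ u} {f : M ⟶ N}
    (h1 : ∀ i, Mono ((resMap hsu f).f i)) (h2 : ∀ i, Mono ((resMap htu f).f i)) : Mono f := by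
  apply mono_of
  intro i
  rcases hcov i.1 i.2 with hi | hi
  · exact h1 ⟨i.1, hi⟩
  · exact h2 ⟨i.1, hi⟩

end

end Comod

end glue

section forward

namespace Comod

lemma joint_mono {C D : Type*} [Category C] [Category D] [Abelian C] [Preadditive D]
    (H : C ⥤ D) [H.Additive] [H.PreservesMonomorphisms] {ι : Type} [Finite ι] {O : C}
    {P : ι → C} (π : ∀ i, O ⟶ P i)
    (h : ∀ {Z : C} {f g : Z ⟶ O}, (∀ i, f ≫ π i = g ≫ π i) → f = g)
    {Z : D} {f g : Z ⟶ H.obj O} (hfg : ∀ i, f ≫ H.map (π i) = g ≫ H.map (π i)) : f = g := by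
  classical
  have := Fintype.ofFinite ι
  let m : O ⟶ ⨁ P := biproduct.lift π
  have hm : Mono m := ⟨fun f g hh => h fun i => by
    have := congrArg (· ≫ biproduct.π P i) hh
    simpa [m] using this⟩
  rw [← cancel_mono (H.map m)]
  have hi : H.map m = ∑ i, H.map (π i) ≫ H.map (biproduct.ι P i) := by
    rw [← Category.comp_id m, ← biproduct.total, Preadditive.comp_sum, H.map_sum]
    refine Finset.sum_congr rfl fun i _ => ?_
    rw [← H.map_comp, ← Category.assoc]
    congr 2
    exact biproduct.lift_π _ _
  rw [hi, Preadditive.comp_sum, Preadditive.comp_sum]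
  refine Finset.sum_congr rfl fun i _ => ?_
  rw [← Category.assoc, hfg, Category.assoc]

section
variable {hsu : ∀ ⦃i⦄, i ∈ s → i ∈ u} {htu : ∀ ⦃i⦄, i ∈ t → i ∈ u}
  {hst : ∀ (i : s) (j : t), i.1 < j.1}

/-- `TX` is the value of `T` at `X`. -/
structure TD (hst : ∀ (i : s) (j : t), i.1 < j.1) (X : Comod F δ s) (TX : Comod F δ t)
    (π : ∀ (i : s) (j : t), TX.X j ⟶ (F (hst i j)).obj (X.X i)) : Prop where
  isT : ∀ j : t, IsT X j.1 (fun i => hst i j) (TX.X j) (fun i => π i j)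
  coact : ∀ (i : s) {k j : t} (h : k.1 < j.1),
    TX.d h ≫ (F h).map (π i k) = π i j ≫ (δ (hst i k) h).app (X.X i)

lemma epi_cov' (hδ : Coassoc F δ) [hadd : ∀ {i j : Fin n} (h : i < j), (F h).Additive]
    [hlex : ∀ {i j : Fin n} (h : i < j), PreservesFiniteLimits (F h)]
    (hcov : ∀ i, i ∈ u → i ∈ s ∨ i ∈ t) {M N : Comod F δ u} {f : M ⟶ N}
    (h1 : Epi (resMap hsu f)) (h2 : Epi (resMap htu f)) : Epi f :=
  epi_cov (hsu := hsu) (htu := htu) hcov (fun i => epi_f hδ _ i) (fun i => epi_f hδ _ i)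

variable [hadd : ∀ {i j : Fin n} (h : i < j), (F h).Additive]
variable [hlex : ∀ {i j : Fin n} (h : i < j), PreservesFiniteLimits (F h)]

section R

variable {X : Comod F δ s} {TX : Comod F δ t}
  {π : ∀ (i : s) (j : t), TX.X j ⟶ (F (hst i j)).obj (X.X i)} (hT : TD hst X TX π)
  (hcov : ∀ i, i ∈ u → i ∈ s ∨ i ∈ t)

lemma TD.joint (hT : TD hst X TX π) {k j : t} (h : k.1 < j.1) {Z : A j.1}
    {f g : Z ⟶ (F h).obj (TX.X k)}
    (hfg : ∀ i, f ≫ (F h).map (π i k) = g ≫ (F h).map (π i k)) : f = g :=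
  joint_mono (F h) (fun i => π i k) (fun {_ _ _} hh => (hT.isT k).ext hh) hfg

lemma TD.toR (hT : TD hst X TX π) (hcov : ∀ i, i ∈ u → i ∈ s ∨ i ∈ t)
    (g : Glue hsu htu hst X TX π) {N : Comod F δ u} (g1 : res hsu N ⟶ X) :
    ∃ f : N ⟶ g.W, resMap hsu f ≫ g.a.hom = g1 := by
  have hl : ∀ j : t, ∃ l : N.X ⟨j.1, htu j.2⟩ ⟶ TX.X j, ∀ i : s, l ≫ π i j =
      N.d (i := ⟨i.1, hsu i.2⟩) (j := ⟨j.1, htu j.2⟩) (hst i j) ≫ (F (hst i j)).map (g1.f i) := by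
    intro j
    apply (hT.isT j).lift
    intro i k h
    rw [Category.assoc, ← Functor.map_comp, g1.comm, Functor.map_comp, Category.assoc]
    refine Eq.trans ?_ (congrArg (_ ≫ ·) (δ_nat δ h (hst k j) (g1.f i)).symm)
    rw [← Category.assoc, ← Category.assoc]
    congr 1
    exact N.compat (i := ⟨i.1, hsu i.2⟩) (k := ⟨k.1, hsu k.2⟩) (j := ⟨j.1, htu j.2⟩) h (hst k j)
  choose l hl using hl
  let g2 : res htu N ⟶ TX := ⟨l, fun {k j} h => by
    apply hT.joint h
    intro i
    rw [Category.assoc, hT.coact, ← Category.assoc, hl, Category.assoc, Category.assoc,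
      ← Functor.map_comp, hl, Functor.map_comp]
    refine (congrArg (_ ≫ ·) (δ_nat δ (hst i k) h (g1.f i))).trans ?_
    rw [← Category.assoc, ← Category.assoc]
    congr 1
    exact (N.compat (i := ⟨i.1, hsu i.2⟩) (k := ⟨k.1, htu k.2⟩) (j := ⟨j.1, htu j.2⟩)
      (hst i k) h).symm⟩
  obtain ⟨f, hf, -⟩ := g.into hcov g1 g2 (fun i j => hl j i)
  exact ⟨f, hf⟩

lemma TD.R_ext (hT : TD hst X TX π) (hcov : ∀ i, i ∈ u → i ∈ s ∨ i ∈ t)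
    (g : Glue hsu htu hst X TX π) {N : Comod F δ u} {f f' : N ⟶ g.W}
    (h : resMap hsu f ≫ g.a.hom = resMap hsu f' ≫ g.a.hom) : f = f' := by
  have h1 : resMap hsu f = resMap hsu f' := (cancel_mono g.a.hom).1 h
  apply ext_cov (hsu := hsu) (htu := htu) hcov h1
  rw [← cancel_mono g.b.hom]
  apply hext
  intro j
  apply (hT.isT j).ext
  intro i
  simp only [comp_f, Category.assoc]
  have e1 := f.comm (i := ⟨i.1, hsu i.2⟩) (j := ⟨j.1, htu j.2⟩) (hst i j)
  have e2 := f'.comm (i := ⟨i.1, hsu i.2⟩) (j := ⟨j.1, htu j.2⟩) (hst i j)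
  have e3 : f.f ⟨i.1, hsu i.2⟩ = f'.f ⟨i.1, hsu i.2⟩ := congr_f h1 i
  rw [← g.comm i j]
  refine (Category.assoc _ _ _).symm.trans (Eq.trans ?_ (Category.assoc _ _ _))
  refine congrArg (· ≫ _) ?_
  exact e1.trans (Eq.trans (by rw [e3]) e2.symm)

lemma TD.R_inj (hT : TD hst X TX π) (hcov : ∀ i, i ∈ u → i ∈ s ∨ i ∈ t)
    (g : Glue hsu htu hst X TX π) (hX : Injective X) : Injective g.W := by
  refine ⟨fun {M N} f ι hι => ?_⟩
  have : Mono (resMap hsu ι) := mono_of _ fun i => mono_f ι _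
  obtain ⟨k, hk⟩ := hT.toR hcov g
    (Injective.factorThru (resMap hsu f ≫ g.a.hom) (resMap hsu ι))
  refine ⟨k, hT.R_ext hcov g ?_⟩
  have h1 : resMap hsu (ι ≫ k) = resMap hsu ι ≫ resMap hsu k := rfl
  rw [h1, Category.assoc, hk, Injective.comp_factorThru]

lemma TD.exists_R (hT : TD hst X TX π) (hcov : ∀ i, i ∈ u → i ∈ s ∨ i ∈ t) :
    Nonempty (Glue hsu htu hst X TX π) :=
  exists_glue hsu htu hst hcov X TX π (fun j h => (hT.isT j).w h) (fun i {_ _} h => hT.coact i h)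

lemma TD.exists_Q (hT : TD hst X TX π) (hcov : ∀ i, i ∈ u → i ∈ s ∨ i ∈ t) {X' : Comod F δ s}
    (p : X ⟶ X') :
    Nonempty (Glue hsu htu hst X' TX (fun i j => π i j ≫ (F (hst i j)).map (p.f i))) := by
  apply exists_glue hsu htu hst hcov
  · intro i k j h
    rw [Category.assoc, ← Functor.map_comp, p.comm, Functor.map_comp, ← Category.assoc,
      (hT.isT j).w h, Category.assoc, Category.assoc, δ_nat]
  · intro i k j h
    rw [Functor.map_comp, ← Category.assoc, hT.coact, Category.assoc, Category.assoc, δ_nat]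

lemma TD.Q_inj (hδ : Coassoc F δ) (hH : Hereditary (Comod F δ u)) (hT : TD hst X TX π)
    (hcov : ∀ i, i ∈ u → i ∈ s ∨ i ∈ t) {X' : Comod F δ s} (p : X ⟶ X') (hp : Epi p)
    (hX : Injective X)
    (q : Glue hsu htu hst X' TX (fun i j => π i j ≫ (F (hst i j)).map (p.f i))) :
    Injective q.W := by
  obtain ⟨r⟩ := hT.exists_R (hsu := hsu) (htu := htu) hcov
  obtain ⟨f, h1, h2⟩ := q.into hcov (N := r.W) (r.a.hom ≫ p) r.b.hom (by
    intro i j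
    rw [← Category.assoc, ← r.comm i j, Category.assoc, comp_f, Functor.map_comp])
  have e1 : resMap hsu f = r.a.hom ≫ p ≫ q.a.inv := by
    rw [← cancel_mono q.a.hom, h1]; simp
  have e2 : resMap htu f = r.b.hom ≫ q.b.inv := by
    rw [← cancel_mono q.b.hom, h2]; simp
  refine hH f (epi_cov' (hsu := hsu) (htu := htu) hδ hcov ?_ ?_) (hT.R_inj hcov r hX)
  · rw [e1]; infer_instance
  · rw [e2]; infer_instance

end R

section L

lemma exists_Z (hcov : ∀ i, i ∈ u → i ∈ s ∨ i ∈ t) (X1 : Comod F δ s) (X2 : Comod F δ t) :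
    Nonempty (Glue hsu htu hst X1 X2 (fun _ _ => 0)) := by
  apply exists_glue hsu htu hst hcov
  · intros; simp
  · intros; simp

lemma hom_zeroObj {N : Comod F δ s} (f g : N ⟶ zeroObj F δ s) : f = g :=
  hext fun _ => (isZero_zero _).eq_of_tgt _ _

lemma zeroObj_hom {N : Comod F δ s} (f g : zeroObj F δ s ⟶ N) : f = g :=
  hext fun _ => (isZero_zero _).eq_of_src _ _

lemma epi_to_zero {N : Comod F δ s} (f : N ⟶ zeroObj F δ s) : Epi f :=
  ⟨fun _ _ _ => zeroObj_hom _ _⟩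

variable {X2 : Comod F δ t}

lemma toL (hcov : ∀ i, i ∈ u → i ∈ s ∨ i ∈ t)
    (g : Glue hsu htu hst (zeroObj F δ s) X2 (fun _ _ => 0)) {N : Comod F δ u}
    (f2 : res htu N ⟶ X2) : ∃ f : N ⟶ g.W, resMap htu f ≫ g.b.hom = f2 := by
  obtain ⟨f, -, hf⟩ := g.into hcov (N := N) (zeroHom _ _) f2 (by
    intro i j
    simp [zeroHom])
  exact ⟨f, hf⟩

lemma L_ext (hcov : ∀ i, i ∈ u → i ∈ s ∨ i ∈ t)
    (g : Glue hsu htu hst (zeroObj F δ s) X2 (fun _ _ => 0)) {N : Comod F δ u} {f f' : N ⟶ g.W}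
    (h : resMap htu f ≫ g.b.hom = resMap htu f' ≫ g.b.hom) : f = f' := by
  apply ext_cov (hsu := hsu) (htu := htu) hcov
  · rw [← cancel_mono g.a.hom]
    exact hom_zeroObj _ _
  · exact (cancel_mono g.b.hom).1 h

lemma L_inj (hcov : ∀ i, i ∈ u → i ∈ s ∨ i ∈ t)
    (g : Glue hsu htu hst (zeroObj F δ s) X2 (fun _ _ => 0)) (hX : Injective X2) :
    Injective g.W := by
  refine ⟨fun {M N} f ι hι => ?_⟩
  have : Mono (resMap htu ι) := mono_of _ fun i => mono_f ι _
  obtain ⟨k, hk⟩ := toL hcov g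
    (Injective.factorThru (resMap htu f ≫ g.b.hom) (resMap htu ι))
  refine ⟨k, L_ext hcov g ?_⟩
  have h1 : resMap htu (ι ≫ k) = resMap htu ι ≫ resMap htu k := rfl
  rw [h1, Category.assoc, hk, Injective.comp_factorThru]

lemma L_ref (hcov : ∀ i, i ∈ u → i ∈ s ∨ i ∈ t)
    (g : Glue hsu htu hst (zeroObj F δ s) X2 (fun _ _ => 0)) (hW : Injective g.W) :
    Injective X2 := by
  refine ⟨fun {M N} f ι hι => ?_⟩
  obtain ⟨gM⟩ := exists_Z (hsu := hsu) (htu := htu) (hst := hst) hcov (zeroObj F δ s) M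
  obtain ⟨gN⟩ := exists_Z (hsu := hsu) (htu := htu) (hst := hst) hcov (zeroObj F δ s) N
  obtain ⟨ι', hι'⟩ := toL hcov gN (gM.b.hom ≫ ι)
  obtain ⟨f', hf'⟩ := toL hcov g (gM.b.hom ≫ f)
  have e2 : resMap htu ι' = gM.b.hom ≫ ι ≫ gN.b.inv := by
    rw [← cancel_mono gN.b.hom, hι']; simp
  have hm : Mono ι' := by
    refine ⟨fun a b hab => L_ext hcov gM ?_⟩
    have h3 : resMap htu (a ≫ ι') = resMap htu (b ≫ ι') := by rw [hab]
    have h4 : resMap htu a ≫ resMap htu ι' = resMap htu b ≫ resMap htu ι' := h3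
    rw [e2] at h4
    have h5 := (cancel_mono (gM.b.hom ≫ ι ≫ gN.b.inv)).1 h4
    rw [h5]
  let k : gN.W ⟶ g.W := Injective.factorThru f' ι'
  have hk : ι' ≫ k = f' := Injective.comp_factorThru _ _
  refine ⟨gN.b.inv ≫ resMap htu k ≫ g.b.hom, ?_⟩
  have h6 : resMap htu ι' ≫ resMap htu k = resMap htu f' := by rw [← hk]; rfl
  rw [← cancel_epi gM.b.hom, ← hf', ← h6, e2]
  simp

lemma hered_up (hδ : Coassoc F δ) (hcov : ∀ i, i ∈ u → i ∈ s ∨ i ∈ t)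
    (hsu : ∀ ⦃i⦄, i ∈ s → i ∈ u) (htu : ∀ ⦃i⦄, i ∈ t → i ∈ u)
    (hst : ∀ (i : s) (j : t), i.1 < j.1) (hH : Hereditary (Comod F δ u)) :
    Hereditary (Comod F δ t) := by
  intro E X p hp hE
  obtain ⟨gE⟩ := exists_Z (hsu := hsu) (htu := htu) (hst := hst) hcov (zeroObj F δ s) E
  obtain ⟨gX⟩ := exists_Z (hsu := hsu) (htu := htu) (hst := hst) hcov (zeroObj F δ s) X
  obtain ⟨f, hf⟩ := toL hcov gX (gE.b.hom ≫ p)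
  have e2 : resMap htu f = gE.b.hom ≫ p ≫ gX.b.inv := by
    rw [← cancel_mono gX.b.hom, hf]; simp
  refine L_ref hcov gX (hH f (epi_cov' (hsu := hsu) (htu := htu) hδ hcov ?_ ?_)
    (L_inj hcov gE hE))
  · have h := epi_to_zero (resMap hsu f ≫ gX.a.hom)
    have h2 : resMap hsu f = (resMap hsu f ≫ gX.a.hom) ≫ gX.a.inv := by simp
    rw [h2]; infer_instance
  · rw [e2]; infer_instance

lemma res_inj_up (hδ : Coassoc F δ) (hcov : ∀ i, i ∈ u → i ∈ s ∨ i ∈ t)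
    (hsu : ∀ ⦃i⦄, i ∈ s → i ∈ u) (htu : ∀ ⦃i⦄, i ∈ t → i ∈ u)
    (hst : ∀ (i : s) (j : t), i.1 < j.1) (hH : Hereditary (Comod F δ u))
    (X : Comod F δ u) (hX : Injective X) : Injective (res htu X) := by
  obtain ⟨g⟩ := exists_Z (hsu := hsu) (htu := htu) (hst := hst) hcov (zeroObj F δ s) (res htu X)
  obtain ⟨f, hf⟩ := toL hcov g (𝟙 (res htu X))
  have e2 : resMap htu f = g.b.inv := by
    rw [← cancel_mono g.b.hom, hf]; simp
  refine L_ref hcov g (hH f (epi_cov' (hsu := hsu) (htu := htu) hδ hcov ?_ ?_) hX)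
  · have h := epi_to_zero (resMap hsu f ≫ g.a.hom)
    have h2 : resMap hsu f = (resMap hsu f ≫ g.a.hom) ≫ g.a.inv := by simp
    rw [h2]; infer_instance
  · rw [e2]; infer_instance

end L

section main

lemma inj_of_iso {C : Type*} [Category C] {X Y : C} (e : X ≅ Y) (h : Injective X) : Injective Y :=
  inj_of_retract e.inv e.hom e.inv_hom_id h

lemma hered_low (hδ : Coassoc F δ) (hcov : ∀ i, i ∈ u → i ∈ s ∨ i ∈ t)
    (hsu : ∀ ⦃i⦄, i ∈ s → i ∈ u) (htu : ∀ ⦃i⦄, i ∈ t → i ∈ u)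
    (hst : ∀ (i : s) (j : t), i.1 < j.1) (hH : Hereditary (Comod F δ u))
    (hTT : ∀ X : Comod F δ s, ∃ (TX : Comod F δ t)
      (π : ∀ (i : s) (j : t), TX.X j ⟶ (F (hst i j)).obj (X.X i)), TD hst X TX π) :
    Hereditary (Comod F δ s) := by
  intro E X p hp hE
  obtain ⟨TE, π, hT⟩ := hTT E
  obtain ⟨q⟩ := hT.exists_Q (hsu := hsu) (htu := htu) hcov p
  have hq := hT.Q_inj hδ hH hcov p hp hE q
  refine inj_of_iso q.a (injective_res hδ hsu ?_ q.W hq)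
  intro i j hij hj
  rcases hcov i.1 i.2 with h | h
  · exact h
  · exact absurd (hst ⟨j.1, hj⟩ ⟨i.1, h⟩) hij.asymm

lemma cond_a1 (hδ : Coassoc F δ) (hcov : ∀ i, i ∈ u → i ∈ s ∨ i ∈ t)
    (hsu : ∀ ⦃i⦄, i ∈ s → i ∈ u) (htu : ∀ ⦃i⦄, i ∈ t → i ∈ u)
    (hH : Hereditary (Comod F δ u)) {X : Comod F δ s} {TX : Comod F δ t}
    {π : ∀ (i : s) (j : t), TX.X j ⟶ (F (hst i j)).obj (X.X i)} (hT : TD hst X TX π)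
    (hX : Injective X) : Injective TX := by
  obtain ⟨r⟩ := hT.exists_R (hsu := hsu) (htu := htu) hcov
  exact inj_of_iso r.b (res_inj_up hδ hcov hsu htu hst hH r.W (hT.R_inj hcov r hX))

lemma cond_b (hδ : Coassoc F δ) (hcov : ∀ i, i ∈ u → i ∈ s ∨ i ∈ t)
    (hsu : ∀ ⦃i⦄, i ∈ s → i ∈ u) (htu : ∀ ⦃i⦄, i ∈ t → i ∈ u)
    (hH : Hereditary (Comod F δ u)) {X X' : Comod F δ s} {TX TX' : Comod F δ t}
    {π : ∀ (i : s) (j : t), TX.X j ⟶ (F (hst i j)).obj (X.X i)} (hT : TD hst X TX π)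
    {π' : ∀ (i : s) (j : t), TX'.X j ⟶ (F (hst i j)).obj (X'.X i)} (hT' : TD hst X' TX' π')
    (p : X ⟶ X') (hp : Epi p) (hX : Injective X) (Tp : TX ⟶ TX')
    (hTp : ∀ i j, Tp.f j ≫ π' i j = π i j ≫ (F (hst i j)).map (p.f i)) : IsSplitEpi Tp := by
  obtain ⟨q⟩ := hT.exists_Q (hsu := hsu) (htu := htu) hcov p
  have hq := hT.Q_inj hδ hH hcov p hp hX q
  obtain ⟨r⟩ := hT'.exists_R (hsu := hsu) (htu := htu) hcov
  obtain ⟨z⟩ := exists_Z (hsu := hsu) (htu := htu) (hst := hst) hcov X' (zeroObj F δ t)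
  have hz : ∀ i j, z.W.d (i := ⟨i.1, hsu i.2⟩) (j := ⟨j.1, htu j.2⟩) (hst i j) ≫
      (F (hst i j)).map (z.a.hom.f i) = 0 := fun i j => (z.comm i j).trans comp_zero
  obtain ⟨zq, hzq, -⟩ := q.into hcov (N := z.W) z.a.hom (zeroHom _ _)
    (fun i j => zero_comp.trans (hz i j).symm)
  obtain ⟨zr, hzr, -⟩ := r.into hcov (N := z.W) z.a.hom (zeroHom _ _)
    (fun i j => zero_comp.trans (hz i j).symm)
  have hm : Mono zr := by
    refine ⟨fun a b hab => ext_cov (hsu := hsu) (htu := htu) hcov ?_ ?_⟩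
    · have h4 : resMap hsu a ≫ resMap hsu zr = resMap hsu b ≫ resMap hsu zr :=
        congrArg (resMap hsu) hab
      have h5 := congrArg (· ≫ r.a.hom) h4
      simp only [Category.assoc, hzr] at h5
      exact (cancel_mono z.a.hom).1 h5
    · rw [← cancel_mono z.b.hom]
      exact hom_zeroObj _ _
  let k : r.W ⟶ q.W := Injective.factorThru zq zr
  have hk : zr ≫ k = zq := Injective.comp_factorThru _ _
  have hk1 : resMap hsu k ≫ q.a.hom = r.a.hom := by
    have h4 : resMap hsu zr ≫ resMap hsu k = resMap hsu zq := congrArg (resMap hsu) hk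
    have h5 : resMap hsu zr = z.a.hom ≫ r.a.inv := by rw [← hzr]; simp
    have h6 : Epi (resMap hsu zr) := by rw [h5]; infer_instance
    rw [← cancel_epi (resMap hsu zr), ← Category.assoc, h4, hzq, hzr]
  refine ⟨⟨⟨r.b.inv ≫ resMap htu k ≫ q.b.hom, ?_⟩⟩⟩
  rw [← cancel_epi r.b.hom]
  apply hext
  intro j
  apply (hT'.isT j).ext
  intro i
  have h1 := q.comm i j
  have h2 := r.comm i j
  have h3 := k.comm (i := ⟨i.1, hsu i.2⟩) (j := ⟨j.1, htu j.2⟩) (hst i j)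
  have h4 : k.f ⟨i.1, hsu i.2⟩ ≫ q.a.hom.f i = r.a.hom.f i := congr_f hk1 i
  simp only [Category.assoc, Iso.hom_inv_id_assoc, Category.comp_id, comp_f]
  rw [hTp i j, ← h2]
  refine (congrArg (_ ≫ ·) h1.symm).trans ?_
  refine (Category.assoc _ _ _).symm.trans ((congrArg (· ≫ _) h3).trans ?_)
  rw [Category.assoc, ← Functor.map_comp]
  exact congrArg (fun z => _ ≫ (F (hst i j)).map z) h4

end main

end

end Comod

end forward

section forward2

namespace Comod

section single

variable {i : Fin n}

/-- The comodule over a single index. -/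
def cst (F : ∀ ⦃i j : Fin n⦄, i < j → (A i ⥤ A j))
    (δ : ∀ ⦃i k j : Fin n⦄ (h₁ : i < k) (h₂ : k < j), F (h₁.trans h₂) ⟶ F h₁ ⋙ F h₂)
    (X : A i) : Comod F δ ({i} : Set (Fin n)) where
  X k := Eq.rec (motive := fun j _ => A j) X (show i = k.1 from k.2.symm)
  d {k l} h := absurd h (by rw [show k.1 = i from k.2, show l.1 = i from l.2]; exact lt_irrefl _)
  compat {k l _} h _ :=
    absurd h (by rw [show k.1 = i from k.2, show l.1 = i from l.2]; exact lt_irrefl _)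

lemma exists_hom1 {M N : Comod F δ ({i} : Set (Fin n))}
    (φ : M.X ⟨i, rfl⟩ ⟶ N.X ⟨i, rfl⟩) : ∃ f : M ⟶ N, f.f ⟨i, rfl⟩ = φ :=
  ⟨⟨fun k => Eq.rec (motive := fun j h => M.X ⟨j, h.symm⟩ ⟶ N.X ⟨j, h.symm⟩) φ
    (show i = k.1 from k.2.symm), fun {k l} h =>
      absurd h (by rw [show k.1 = i from k.2, show l.1 = i from l.2]; exact lt_irrefl _)⟩, rfl⟩

lemma hext1 {M N : Comod F δ ({i} : Set (Fin n))} {f g : M ⟶ N}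
    (h : f.f ⟨i, rfl⟩ = g.f ⟨i, rfl⟩) : f = g := by
  apply hext
  rintro ⟨k, rfl⟩
  exact h

variable [hadd : ∀ {i j : Fin n} (h : i < j), (F h).Additive]
variable [hlex : ∀ {i j : Fin n} (h : i < j), PreservesFiniteLimits (F h)]

lemma cst_inj (X : A i) (hX : Injective X) : Injective (cst F δ X) := by
  refine ⟨fun {M N} f ι hι => ?_⟩
  have := mono_f ι ⟨i, rfl⟩
  obtain ⟨k, hk⟩ := hX.factors (f.f ⟨i, rfl⟩) (ι.f ⟨i, rfl⟩)
  obtain ⟨k', hk'⟩ := exists_hom1 (M := N) (N := cst F δ X) k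
  refine ⟨k', hext1 ?_⟩
  rw [comp_f, hk']
  exact hk

lemma inj_cst (X : A i) (hX : Injective (cst F δ X)) : Injective X := by
  refine ⟨fun {M N} f ι hι => ?_⟩
  obtain ⟨ι', hι'⟩ := exists_hom1 (M := cst F δ M) (N := cst F δ N) ι
  obtain ⟨f', hf'⟩ := exists_hom1 (M := cst F δ M) (N := cst F δ X) f
  have : Mono ι' := mono_of _ (by rintro ⟨k, rfl⟩; rw [hι']; exact hι)
  obtain ⟨k, hk⟩ := hX.factors f' ι'
  refine ⟨k.f ⟨i, rfl⟩, ?_⟩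
  have := congr_f hk ⟨i, rfl⟩
  rw [comp_f, hι', hf'] at this
  exact this

lemma hered_single (hH : Hereditary (Comod F δ ({i} : Set (Fin n)))) : Hereditary (A i) := by
  intro E X p hp hE
  obtain ⟨p', hp'⟩ := exists_hom1 (M := cst F δ E) (N := cst F δ X) p
  refine inj_cst (δ := δ) X (hH p' (epi_of _ ?_) (cst_inj E hE))
  rintro ⟨k, rfl⟩
  rw [hp']
  exact hp

end single

section T1

variable [hadd : ∀ {i j : Fin n} (h : i < j), (F h).Additive]
variable [hlex : ∀ {i j : Fin n} (h : i < j), PreservesFiniteLimits (F h)]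

/-- The comodule over the indices `> i` determined by an object of `A i`. -/
abbrev T1 (hδ : Coassoc F δ) {i : Fin n} (E : A i) : Comod F δ {j : Fin n | i < j} where
  X j := (F (show i < j.1 from j.2)).obj E
  d {k j} h := (δ (show i < k.1 from k.2) h).app E
  compat {l k j} h₁ h₂ := (hδ (show i < l.1 from l.2) h₁ h₂ E).symm

lemma T1_inj_aux (hδ : Coassoc F δ) (hH : Hereditary (Comod F δ Set.univ)) {i : Fin n}
    (Y : ∀ i : (Set.univ : Set (Fin n)), A i.1) (hY : ∀ i, Injective (Y i)) :
    Injective (T1 hδ (Y ⟨i, trivial⟩)) := by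
  have h1 : Injective (res (s := {j : Fin n | i < j}) (fun _ _ => trivial) (G hδ Y)) :=
    res_inj_up (s := {j : Fin n | j ≤ i}) hδ (fun j _ => le_or_gt j i) (fun _ _ => trivial)
      (fun _ _ => trivial) (fun k j => lt_of_le_of_lt k.2 j.2) hH _ (injective_G hδ Y hY)
  let a : T1 hδ (Y ⟨i, trivial⟩) ⟶
      res (s := {j : Fin n | i < j}) (u := Set.univ) (fun _ _ => trivial) (G hδ Y) :=
    ⟨fun j => gj (k := ⟨j.1, trivial⟩) Y ⟨⟨i, trivial⟩, j.2⟩, fun {k j} h => by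
      apply GX_ext Y ⟨k.1, trivial⟩ (F h)
      · rw [Category.assoc, Category.assoc, ← Functor.map_comp]
        refine Eq.trans ?_ ((congrArg (fun z => _ ≫ (F h).map z) (gj_gp (F := F) Y
          (k := ⟨k.1, trivial⟩) ⟨⟨i, trivial⟩, k.2⟩)).trans
            (by rw [Functor.map_zero, comp_zero])).symm
        refine (congrArg (_ ≫ ·) (Gd_gp (δ := δ) Y (i := ⟨k.1, trivial⟩)
          (j := ⟨j.1, trivial⟩) h)).trans ?_
        refine gj_gq_ne Y (i := ⟨i, trivial⟩) (i' := ⟨k.1, trivial⟩) (k := ⟨j.1, trivial⟩) _ h ?_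
        intro hh
        exact (show i < k.1 from k.2).ne (congrArg Subtype.val hh)
      · intro l hl
        rw [Category.assoc, Category.assoc, ← Functor.map_comp]
        refine (congrArg (_ ≫ ·) (Gd_gq (δ := δ) Y (l := l) (i := ⟨k.1, trivial⟩)
          (j := ⟨j.1, trivial⟩) hl h)).trans ?_
        rw [← Category.assoc]
        by_cases hli : ⟨i, trivial⟩ = l
        · subst hli
          refine (congrArg (· ≫ _) (gj_gq_self Y (i := ⟨i, trivial⟩) (k := ⟨j.1, trivial⟩)
            (hl.trans h))).trans ?_
          rw [Category.id_comp]
          refine ((congrArg (fun z => _ ≫ (F h).map z) (gj_gq_self Y (i := ⟨i, trivial⟩)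
            (k := ⟨k.1, trivial⟩) hl)).trans ?_).symm
          rw [CategoryTheory.Functor.map_id]
          exact Category.comp_id _
        · refine (congrArg (· ≫ _) (gj_gq_ne Y (i := ⟨i, trivial⟩) (i' := l)
            (k := ⟨j.1, trivial⟩) j.2 (hl.trans h) hli)).trans ?_
          rw [zero_comp]
          refine ((congrArg (fun z => _ ≫ (F h).map z) (gj_gq_ne Y (i := ⟨i, trivial⟩) (i' := l)
            (k := ⟨k.1, trivial⟩) k.2 hl hli)).trans ?_).symm
          rw [Functor.map_zero, comp_zero]⟩
  let r : res (s := {j : Fin n | i < j}) (u := Set.univ) (fun _ _ => trivial) (G hδ Y) ⟶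
      T1 hδ (Y ⟨i, trivial⟩) :=
    ⟨fun j => gq (i := ⟨i, trivial⟩) (k := ⟨j.1, trivial⟩) Y j.2, fun {k j} h =>
      (Gd_gq (δ := δ) Y (l := ⟨i, trivial⟩) (i := ⟨k.1, trivial⟩) (j := ⟨j.1, trivial⟩)
        k.2 h).symm⟩
  refine inj_of_retract a r ?_ h1
  apply hext
  intro j
  exact gj_gq_self Y (i := ⟨i, trivial⟩) (k := ⟨j.1, trivial⟩) j.2

lemma T1_inj (hδ : Coassoc F δ) (hH : Hereditary (Comod F δ Set.univ)) {i : Fin n}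
    (E : A i) (hE : Injective E) : Injective (T1 hδ E) := by
  classical
  let Y : ∀ k : (Set.univ : Set (Fin n)), A k.1 := fun k =>
    Function.update (fun k => (0 : A k)) i E k.1
  have hYi : Y ⟨i, trivial⟩ = E := Function.update_self _ _ _
  have hY : ∀ k, Injective (Y k) := by
    rintro ⟨k, hk⟩
    by_cases h : k = i
    · subst h
      rw [hYi]; exact hE
    · have : Y ⟨k, hk⟩ = 0 := Function.update_of_ne h _ _
      rw [this]; infer_instance
  have := T1_inj_aux hδ hH Y hY (i := i)
  rwa [hYi] at this

lemma Gd_split {l : Set (Fin n)} (Y : ∀ i : l, A i.1) {k j : l} (h : k.1 < j.1)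
    (hs : ∀ (i : l) (hi : i.1 < k.1), IsSplitEpi ((δ hi h).app (Y i))) :
    ∃ σ : (F h).obj (GX F Y k) ⟶ GX F Y j, σ ≫ Gd δ Y h = 𝟙 _ := by
  classical
  have hs' : ∀ (i : l) (hi : i.1 < k.1), ∃ τ, τ ≫ (δ hi h).app (Y i) = 𝟙 _ := fun i hi => by
    obtain ⟨⟨τ, hτ⟩⟩ := (hs i hi).exists_splitEpi
    exact ⟨τ, hτ⟩
  choose τ hτ using hs'
  let β : ∀ (i : l) (hi : i.1 < j.1), (F h).obj (GX F Y k) ⟶ (F hi).obj (Y i) := fun i hi =>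
    if hik : i.1 < k.1 then (F h).map (gq Y hik) ≫ τ i hik
    else if he : i = k then by subst he; exact (F hi).map (gp Y i)
    else 0
  have hβ1 : ∀ (i : l) (hi : i.1 < k.1), β i (hi.trans h) = (F h).map (gq Y hi) ≫ τ i hi :=
    fun i hi => dif_pos hi
  have hβ2 : β k h = (F h).map (gp Y k) := by
    simp [β]
  refine ⟨glift Y 0 β, ?_⟩
  apply GX_ext Y k (F h)
  · rw [Category.assoc, Gd_gp, glift_gq, hβ2, Category.id_comp]
  · intro i hi
    rw [Category.assoc, Gd_gq, ← Category.assoc, glift_gq, hβ1, Category.assoc, hτ,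
      Category.id_comp]
    exact Category.comp_id _

lemma cond_ac (hδ : Coassoc F δ) (hH : Hereditary (Comod F δ Set.univ)) (i : Fin n) :
    (∀ (j : Fin n) (h : i < j) (E : A i), Injective E → Injective ((F h).obj E)) ∧
    (∀ (k j : Fin n) (hik : i < k) (hkj : k < j) (E : A i), Injective E →
      IsSplitEpi ((δ hik hkj).app E)) := by
  refine WellFounded.induction (r := (· > ·)) (wellFounded_gt (α := Fin n))
    (C := fun i => (∀ (j : Fin n) (h : i < j) (E : A i), Injective E → Injective ((F h).obj E)) ∧
    (∀ (k j : Fin n) (hik : i < k) (hkj : k < j) (E : A i), Injective E →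
      IsSplitEpi ((δ hik hkj).app E))) i ?_
  intro i ih
  constructor
  · intro j h E hE
    obtain ⟨Y, hY, a, r, har⟩ := exists_retract hδ _ (T1_inj hδ hH E hE)
    exact inj_of_retract (a.f ⟨j, h⟩) (r.f ⟨j, h⟩) (congr_f har ⟨j, h⟩)
      (injective_GX (fun l j h hl E hE => (ih l hl).1 j h E hE) Y hY ⟨j, h⟩)
  · intro k j hik hkj E hE
    obtain ⟨Y, hY, a, r, har⟩ := exists_retract hδ _ (T1_inj hδ hH E hE)
    obtain ⟨σ, hσ⟩ := Gd_split (δ := δ) Y (k := ⟨k, hik⟩) (j := ⟨j, hik.trans hkj⟩) hkj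
      (fun l hl => (ih l.1 l.2).2 k j hl hkj _ (hY l))
    refine ⟨⟨⟨(F hkj).map (a.f ⟨k, hik⟩) ≫ σ ≫ r.f ⟨j, hik.trans hkj⟩, ?_⟩⟩⟩
    have h1 := r.comm (i := ⟨k, hik⟩) (j := ⟨j, hik.trans hkj⟩) hkj
    have h2 := congr_f har ⟨k, hik⟩
    rw [comp_f, id_f] at h2
    simp only [Category.assoc]
    refine (congrArg (fun z => _ ≫ σ ≫ z) h1).trans ?_
    rw [← Category.assoc σ]
    refine (congrArg (fun z => (F hkj).map (a.f ⟨k, hik⟩) ≫ z ≫ _) hσ).trans ?_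
    rw [Category.id_comp, ← Functor.map_comp, h2]
    exact CategoryTheory.Functor.map_id _ _

end T1

end Comod

end forward2

end helpers

open scoped ZeroObject

theorem stmt_17
    -- coassociativity of the comonad data:
    (hδ : ∀ ⦃i k l j : Fin n⦄ (h₁ : i < k) (h₂ : k < l) (h₃ : l < j) (X : A i),
      (δ h₁ (h₂.trans h₃)).app X ≫ (δ h₂ h₃).app ((F h₁).obj X) =
        (δ (h₁.trans h₂) h₃).app X ≫ (F h₃).map ((δ h₁ h₂).app X))
    -- the functors `F_{ij}` are additive and left exact:
    (hadd : ∀ ⦃i j : Fin n⦄ (h : i < j), (F h).Additive)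
    (hlex : ∀ ⦃i j : Fin n⦄ (h : i < j), PreservesFiniteLimits (F h))
    -- the functors `T^m`, with the data characterising them:
    (T : ∀ (m : ℕ), 1 ≤ m → m < n →
      (Comod F δ (lowSet n m) ⥤ Comod F δ (highSet n m)))
    (e : ∀ (m : ℕ) (h₁ : 1 ≤ m) (h₂ : m < n) (X : Comod F δ (lowSet n m))
      (j : highSet n m), ((T m h₁ h₂).obj X).X j ⟶ VObj F δ X j)
    (hw : ∀ (m : ℕ) (h₁ : 1 ≤ m) (h₂ : m < n) (X : Comod F δ (lowSet n m))
      (j : highSet n m),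
      e m h₁ h₂ X j ≫ phi F δ X j = e m h₁ h₂ X j ≫ psi F δ X j)
    (hlim : ∀ (m : ℕ) (h₁ : 1 ≤ m) (h₂ : m < n) (X : Comod F δ (lowSet n m))
      (j : highSet n m),
      Nonempty (IsLimit (Fork.ofι (e m h₁ h₂ X j) (hw m h₁ h₂ X j))))
    (hnat : ∀ (m : ℕ) (h₁ : 1 ≤ m) (h₂ : m < n) (X Y : Comod F δ (lowSet n m))
      (f : X ⟶ Y) (j : highSet n m),
      ((T m h₁ h₂).map f).f j ≫ e m h₁ h₂ Y j = e m h₁ h₂ X j ≫ Vmap F δ f j)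
    (hcoact : ∀ (m : ℕ) (h₁ : 1 ≤ m) (h₂ : m < n) (X : Comod F δ (lowSet n m))
      (j k : highSet n m) (h : j.1 < k.1),
      ((T m h₁ h₂).obj X).d h ≫ (F h).map (e m h₁ h₂ X j) =
        e m h₁ h₂ X k ≫ lamV F δ X j k h) :
    Hereditary (Comod F δ Set.univ) ↔
      -- (a): `T^{n-1}` and all the `F_{ij}` preserve injectives
      (((∀ (h₁ : 1 ≤ n - 1) (h₂ : n - 1 < n) (E : Comod F δ (lowSet n (n - 1))),
          Injective E → Injective ((T (n - 1) h₁ h₂).obj E)) ∧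
        (∀ ⦃i j : Fin n⦄ (h : i < j) (E : A i),
          Injective E → Injective ((F h).obj E))) ∧
      -- (b): each `T^m` sends epimorphisms between injectives to split epimorphisms
      (∀ (m : ℕ) (h₁ : 1 ≤ m) (h₂ : m < n)
          (E E' : Comod F δ (lowSet n m)) (p : E ⟶ E'),
          Epi p → Injective E → Injective E' → IsSplitEpi ((T m h₁ h₂).map p)) ∧
      -- (c): the components of `δ` at injectives are split epimorphisms
      (∀ ⦃i j k : Fin n⦄ (hij : i < j) (hjk : j < k) (E : A i),
          Injective E → IsSplitEpi ((δ hij hjk).app E)) ∧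
      -- (d): each `A_i` is hereditary
      (∀ i : Fin n, Hereditary (A i))) := by
  have hδ' : Comod.Coassoc F δ := hδ
  haveI hadd' : ∀ {i j : Fin n} (h : i < j), (F h).Additive := fun h => hadd h
  haveI hlex' : ∀ {i j : Fin n} (h : i < j), PreservesFiniteLimits (F h) := fun h => hlex h
  have hTD : ∀ (m : ℕ) (h₁ : 1 ≤ m) (h₂ : m < n) (X : Comod F δ (lowSet n m)),
      Comod.TD (fun i j => low_lt_high i j) X ((T m h₁ h₂).obj X)
        (fun i j => e m h₁ h₂ X j ≫ Comod.vp X j i) := by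
    intro m h₁ h₂ X
    refine ⟨fun j => Comod.isT_of X j _ (hw m h₁ h₂ X j) (hlim m h₁ h₂ X j), ?_⟩
    intro i k j h
    rw [Functor.map_comp, ← Category.assoc, hcoact, Category.assoc, Comod.lamV_vp,
      Category.assoc]
  have hTnat : ∀ (m : ℕ) (h₁ : 1 ≤ m) (h₂ : m < n) (X Y : Comod F δ (lowSet n m)) (f : X ⟶ Y)
      (i : lowSet n m) (j : highSet n m),
      ((T m h₁ h₂).map f).f j ≫ (e m h₁ h₂ Y j ≫ Comod.vp Y j i) =
        (e m h₁ h₂ X j ≫ Comod.vp X j i) ≫ (F (low_lt_high i j)).map (f.f i) := by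
    intro m h₁ h₂ X Y f i j
    rw [← Category.assoc, hnat, Category.assoc, Comod.Vmap_vp, Category.assoc]
  have hcov : ∀ (m : ℕ) (i : Fin n), i ∈ (Set.univ : Set (Fin n)) →
      i ∈ lowSet n m ∨ i ∈ highSet n m := fun m i _ => lt_or_ge i.1 m
  have hn : lowSet n n = Set.univ := by
    ext i
    exact ⟨fun _ => trivial, fun _ => i.2⟩
  constructor
  · intro hH
    refine ⟨⟨?_, ?_⟩, ?_, ?_, ?_⟩
    · intro h₁ h₂ E hE
      exact Comod.cond_a1 hδ' (hcov _) (fun _ _ => trivial) (fun _ _ => trivial) hH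
        (hTD _ h₁ h₂ E) hE
    · intro i j h E hE
      exact (Comod.cond_ac hδ' hH i).1 j h E hE
    · intro m h₁ h₂ E E' p hp hE _
      exact Comod.cond_b hδ' (hcov _) (fun _ _ => trivial) (fun _ _ => trivial) hH
        (hTD m h₁ h₂ E) (hTD m h₁ h₂ E') p hp hE _ (hTnat m h₁ h₂ E E' p)
    · intro i j k hij hjk E hE
      exact (Comod.cond_ac hδ' hH i).2 j k hij hjk E hE
    · intro i
      have h1 : Hereditary (Comod F δ (lowSet n (i.1 + 1))) := by
        rcases Nat.lt_or_ge (i.1 + 1) n with h | h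
        · exact Comod.hered_low hδ' (hcov _) (fun _ _ => trivial) (fun _ _ => trivial)
            (fun i j => low_lt_high i j) hH
            (fun X => ⟨_, _, hTD (i.1 + 1) (Nat.succ_pos _) h X⟩)
        · have : i.1 + 1 = n := le_antisymm i.2 h
          rw [this, hn]
          exact hH
      refine Comod.hered_single (Comod.hered_up (s := lowSet n i.1) (t := {i}) hδ' ?_ ?_ ?_ ?_ h1)
      · intro j hj
        rcases Nat.lt_succ_iff_lt_or_eq.mp (show j.1 < i.1 + 1 from hj) with h | h
        · exact Or.inl h
        · exact Or.inr (Fin.ext h)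
      · intro j hj
        exact Nat.lt_succ_of_lt hj
      · rintro j rfl
        exact Nat.lt_succ_self _
      · rintro j ⟨k, rfl⟩
        exact j.2
  · rintro ⟨⟨-, hF⟩, hb, -, hA⟩
    have key : ∀ k : ℕ, k ≤ n → Hereditary (Comod F δ (lowSet n k)) := by
      intro k
      induction k with
      | zero =>
        intro _ E X p hp hE
        refine ⟨fun {M N} g f hf => ?_⟩
        exact ⟨⟨fun i => absurd i.2 (Nat.not_lt_zero _),
          fun {i} => absurd i.2 (Nat.not_lt_zero _)⟩,
          Comod.hext fun i => absurd i.2 (Nat.not_lt_zero _)⟩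
      | succ k ih =>
        intro hk
        have ihk := ih (Nat.le_of_succ_le hk)
        have hsu : ∀ ⦃i : Fin n⦄, i ∈ lowSet n k → i ∈ lowSet n (k + 1) :=
          fun i hi => Nat.lt_succ_of_lt hi
        have hκ : (⟨k, hk⟩ : Fin n) ∈ lowSet n (k + 1) := Nat.lt_succ_self k
        have hu : ∀ i : Fin n, i ∈ lowSet n (k + 1) → i ∈ lowSet n k ∨ i = ⟨k, hk⟩ := by
          intro j hj
          rcases Nat.lt_succ_iff_lt_or_eq.mp (show j.1 < k + 1 from hj) with h | h
          · exact Or.inl h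
          · exact Or.inr (Fin.ext h)
        rcases Nat.eq_zero_or_pos k with h0 | h0
        · have he : ∀ i : lowSet n k, False := fun i => by
            have := i.2
            subst h0
            exact Nat.not_lt_zero _ this
          refine Comod.step (κ := ⟨k, hk⟩) (hs := fun i => (he i).elim) hδ' hsu hκ hu
            (fun _ => 0) (fun _ i => (he i).elim) ?_ hF ?_ (hA _) ihk
          · intro X
            exact ⟨fun {i} => (he i).elim, fun _ => (isZero_zero _).eq_of_tgt _ _,
              fun a _ => ⟨0, fun i => (he i).elim⟩⟩
          · intro E E' p l _ _ _ _
            exact ⟨⟨⟨0, (isZero_zero _).eq_of_tgt _ _⟩⟩⟩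
        · let K : highSet n k := ⟨⟨k, hk⟩, le_refl k⟩
          refine Comod.step (κ := ⟨k, hk⟩) (hs := fun i => low_lt_high i K) hδ' hsu hκ hu
            (fun X => ((T k h0 hk).obj X).X K) (fun X i => e k h0 hk X K ≫ Comod.vp X K i)
            (fun X => (hTD k h0 hk X).isT K) hF ?_ (hA _) ihk
          intro E E' p l hp hE hE' hl
          have hl' : l = ((T k h0 hk).map p).f K := by
            apply ((hTD k h0 hk E').isT K).ext
            intro i
            rw [hl i, hTnat]
          obtain ⟨⟨σ, hσ⟩⟩ := (hb k h0 hk E E' p hp hE hE').exists_splitEpi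
          rw [hl']
          exact ⟨⟨⟨σ.f K, Comod.congr_f hσ K⟩⟩⟩
    have := key n le_rfl
    rwa [hn] at this
end
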